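/- Let n ≥ 2, k ≥ 1, 1 ≤ η < n, and set d = n + k. Let λ_{η+1+k},…,λ_{n+k} be integers with 1 ≤ λ_j ≤ n+k and λ_j ≤ j for each η+1+k ≤ j ≤ n+k. Define the n-tuple of quadratic forms on ℝ^{n+k} by Q = (ξ_1², …, ξ_η², ξ_{λ_{η+1+k}} ξ_{η+1+k}, ξ_{λ_{η+2+k}} ξ_{η+2+k}, …, ξ_{λ_{n+k}} ξ_{n+k}), and for each 1 ≤ j ≤ n+k set w_j = #{η+1+k ≤ i ≤ n+k : λ_i = j}. Assume w_j ≥ 1 for each η+1 ≤ j ≤ η+k. Define q_2 = max{ max_{1≤j≤η} w_j + 4, max_{η+1≤j≤η+k} w_j + 2, max_{η+1+k≤j≤n+k} w_j + 3 }. Then for all exponents p, q ∈ [1,∞] with q > q_2 and 1/p + (q_2 − 1)/q < 1, there exists a constant C such that ‖E^Q f‖_{L^q(ℝ^{2n+k})} ≤ C ‖f‖_{L^p([0,1]^{n+k})} for every measurable function f : [0,1]^{n+k} → ℂ. -/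

import Mathlib

open MeasureTheory
open scoped ENNReal

/-- The extension operator associated to the quadratic surface
`S_Q = {(ξ, Q ξ) : ξ ∈ [0,1]^d} ⊆ ℝ^{d+n}`. -/
noncomputable def extOp (d n : ℕ) (Q : (Fin d → ℝ) → Fin n → ℝ)
    (f : (Fin d → ℝ) → ℂ) (x : Fin (d + n) → ℝ) : ℂ :=
  ∫ ξ in Set.Icc (0 : Fin d → ℝ) 1,
    Complex.exp (2 * (Real.pi : ℂ) * Complex.I *
      ((((∑ i : Fin d, x (Fin.castAdd n i) * ξ i) +
        ∑ j : Fin n, x (Fin.natAdd d j) * Q ξ j : ℝ)) : ℂ)) * f ξ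

set_option linter.unusedSectionVars false


theorem mink_aux {α β : Type*} [MeasurableSpace α] [MeasurableSpace β]
    (μ : Measure α) (ν : Measure β) [SigmaFinite μ] [SigmaFinite ν]
    (f : α → β → ℝ≥0∞) (hf : Measurable (Function.uncurry f)) {r : ℝ} (hr : 1 < r)
    (G : α → ℝ≥0∞) (hG : Measurable G) (hGF : ∀ a, G a ≤ ∫⁻ b, f a b ∂ν)
    (hfin : ∫⁻ a, G a ^ r ∂μ ≠ ∞) :
    (∫⁻ a, G a ^ r ∂μ) ^ (1 / r) ≤ ∫⁻ b, (∫⁻ a, f a b ^ r ∂μ) ^ (1 / r) ∂ν := by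
  have hr0 : 0 < r := by linarith
  set X := ∫⁻ a, G a ^ r ∂μ with hX
  have hconj : r.HolderConjugate (r / (r - 1)) := Real.HolderConjugate.conjExponent hr
  have key : X ≤ (∫⁻ b, (∫⁻ a, f a b ^ r ∂μ) ^ (1 / r) ∂ν) * X ^ (1 - 1 / r) := by
    calc X ≤ ∫⁻ a, (∫⁻ b, f a b ∂ν) * G a ^ (r - 1) ∂μ := by
          apply lintegral_mono
          intro a
          have : G a ^ r = G a * G a ^ (r - 1) := by
            conv_lhs => rw [show r = 1 + (r - 1) by ring]
            rw [ENNReal.rpow_add_of_nonneg _ _ (by norm_num) (by linarith), ENNReal.rpow_one]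
          dsimp only
          rw [this]
          gcongr
          exact hGF a
      _ = ∫⁻ a, ∫⁻ b, f a b * G a ^ (r - 1) ∂ν ∂μ := by
          congr 1; ext a
          rw [lintegral_mul_const]
          exact hf.comp (measurable_prodMk_left)
      _ = ∫⁻ b, ∫⁻ a, f a b * G a ^ (r - 1) ∂μ ∂ν := by
          rw [lintegral_lintegral_swap]
          apply Measurable.aemeasurable
          exact hf.mul ((hG.pow_const _).comp measurable_fst)
      _ ≤ ∫⁻ b, (∫⁻ a, f a b ^ r ∂μ) ^ (1 / r) * X ^ (1 - 1 / r) ∂ν := by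
          apply lintegral_mono
          intro b
          have hfb : Measurable (fun a => f a b) := hf.comp (measurable_prodMk_right)
          refine (ENNReal.lintegral_mul_le_Lp_mul_Lq μ hconj hfb.aemeasurable
            (hG.pow_const _).aemeasurable).trans ?_
          refine mul_le_mul' le_rfl (le_of_eq ?_)
          rw [hX]
          have h1 : ∀ a, (G a ^ (r - 1)) ^ (r / (r - 1)) = G a ^ r := by
            intro a
            rw [← ENNReal.rpow_mul]; congr 1
            have : r - 1 ≠ 0 := by linarith
            field_simp
          simp_rw [h1]
          congr 1
          have : r - 1 ≠ 0 := by linarith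
          field_simp
      _ = _ := by
          rw [lintegral_mul_const]
          have : Measurable (fun (p : β × α) => f p.2 p.1 ^ r) :=
            (hf.comp measurable_swap).pow_const _
          exact (this.lintegral_prod_right').pow_const _
  by_cases hX0 : X = 0
  · rw [hX0, ENNReal.zero_rpow_of_pos (by positivity)]; exact zero_le
  have h2 : X = X ^ (1 / r) * X ^ (1 - 1 / r) := by
    rw [← ENNReal.rpow_add _ _ hX0 hfin]; simp
  rw [h2] at key
  have h3 : X ^ (1 - 1 / r) ≠ 0 := by
    simp [ENNReal.rpow_eq_zero_iff, hX0, hfin]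
  have h4 : X ^ (1 - 1 / r) ≠ ∞ := by
    simp [ENNReal.rpow_eq_top_iff, hX0, hfin]
  have key' : X ^ (1 / r) * X ^ (1 - 1 / r) ≤
      (∫⁻ b, (∫⁻ a, f a b ^ r ∂μ) ^ (1 / r) ∂ν) * X ^ (1 - 1 / r) := by
    rw [← h2] at key ⊢; exact key
  exact (ENNReal.mul_le_mul_iff_left h3 h4).1 key'

theorem minkowski {α β : Type*} [MeasurableSpace α] [MeasurableSpace β]
    (μ : Measure α) (ν : Measure β) [SigmaFinite μ] [SigmaFinite ν]
    (f : α → β → ℝ≥0∞) (hf : Measurable (Function.uncurry f)) {r : ℝ} (hr : 1 ≤ r) :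
    (∫⁻ a, (∫⁻ b, f a b ∂ν) ^ r ∂μ) ^ (1 / r) ≤
      ∫⁻ b, (∫⁻ a, f a b ^ r ∂μ) ^ (1 / r) ∂ν := by
  classical
  rcases hr.eq_or_lt with rfl | hr
  · simp only [ENNReal.rpow_one, div_one]
    rw [lintegral_lintegral_swap hf.aemeasurable]
  have hr0 : 0 < r := by linarith
  have hFm : Measurable (fun a => ∫⁻ b, f a b ∂ν) := hf.lintegral_prod_right'
  set G : ℕ → α → ℝ≥0∞ := fun N => (spanningSets μ N).indicator
    (fun a => min (∫⁻ b, f a b ∂ν) N) with hGdef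
  have hGm : ∀ N, Measurable (G N) := fun N =>
    (hFm.min measurable_const).indicator (measurableSet_spanningSets μ N)
  have hmono : Monotone G := by
    intro N M hNM a
    simp only [hGdef, Set.indicator_apply]
    split_ifs with h1 h2
    · gcongr
    · exact absurd (monotone_spanningSets μ hNM h1) h2
    · exact zero_le
    · exact le_rfl
  have hsup : ∀ a, ⨆ N, G N a ^ r = (∫⁻ b, f a b ∂ν) ^ r := by
    intro a
    apply le_antisymm
    · apply iSup_le; intro N
      gcongr
      simp only [hGdef, Set.indicator_apply]
      split_ifs
      · exact min_le_left _ _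
      · exact zero_le
    · have hlim : Filter.Tendsto (fun N => G N a) Filter.atTop (nhds (∫⁻ b, f a b ∂ν)) := by
        have h1 : Filter.Tendsto (fun N : ℕ => min (∫⁻ b, f a b ∂ν) (N : ℝ≥0∞))
            Filter.atTop (nhds (min (∫⁻ b, f a b ∂ν) ∞)) :=
          tendsto_const_nhds.min ENNReal.tendsto_nat_nhds_top
        rw [min_eq_left le_top] at h1
        refine h1.congr' ?_
        obtain ⟨N0, hN0⟩ := Set.mem_iUnion.1 ((iUnion_spanningSets μ).symm ▸ Set.mem_univ a)
        filter_upwards [Filter.eventually_ge_atTop N0] with N hN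
        simp only [hGdef]
        rw [Set.indicator_of_mem (monotone_spanningSets μ hN hN0)]
      have := hlim.ennrpow_const r
      exact le_of_tendsto this (Filter.Eventually.of_forall fun N =>
        le_iSup (fun N => G N a ^ r) N)
  have h1 : ∫⁻ a, (∫⁻ b, f a b ∂ν) ^ r ∂μ = ⨆ N, ∫⁻ a, G N a ^ r ∂μ := by
    rw [← lintegral_iSup (fun N => (hGm N).pow_const _)]
    · simp_rw [hsup]
    · intro N M h a
      exact ENNReal.rpow_le_rpow (hmono h a) hr0.le
  have hle : ∀ N, ∫⁻ a, G N a ^ r ∂μ ≤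
      (∫⁻ b, (∫⁻ a, f a b ^ r ∂μ) ^ (1 / r) ∂ν) ^ r := by
    intro N
    have := mink_aux μ ν f hf hr (G N) (hGm N) ?_ ?_
    · calc _ = ((∫⁻ a, G N a ^ r ∂μ) ^ (1 / r)) ^ r := by
            rw [← ENNReal.rpow_mul]; simp [hr0.ne']
        _ ≤ _ := by gcongr
    · intro a
      simp only [hGdef, Set.indicator_apply]
      split_ifs
      · exact min_le_left _ _
      · exact zero_le
    · have : ∫⁻ a, G N a ^ r ∂μ ≤ ∫⁻ a, (spanningSets μ N).indicator
          (fun _ => (N : ℝ≥0∞) ^ r) a ∂μ := by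
        apply lintegral_mono; intro a
        simp only [hGdef, Set.indicator_apply]
        split_ifs
        · gcongr; exact min_le_right _ _
        · simp [hr0]
      refine (this.trans_lt ?_).ne
      rw [lintegral_indicator (measurableSet_spanningSets μ N), setLIntegral_const]
      exact ENNReal.mul_lt_top (ENNReal.rpow_lt_top_of_nonneg hr0.le (by simp))
        (measure_spanningSets_lt_top μ N)
  calc _ ≤ ((∫⁻ b, (∫⁻ a, f a b ^ r ∂μ) ^ (1 / r) ∂ν) ^ r) ^ (1 / r) := by
        gcongr
        rw [h1]; exact iSup_le hle
    _ = _ := by rw [← ENNReal.rpow_mul]; simp [hr0.ne']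

/-- mixed norm Minkowski -/
theorem minkowski_mixed {α β : Type*} [MeasurableSpace α] [MeasurableSpace β]
    (μ : Measure α) (ν : Measure β) [SigmaFinite μ] [SigmaFinite ν]
    (f : α → β → ℝ≥0∞) (hf : Measurable (Function.uncurry f)) {p q : ℝ} (hp : 0 < p)
    (hpq : p ≤ q) :
    (∫⁻ a, ((∫⁻ b, f a b ^ p ∂ν) ^ (1 / p)) ^ q ∂μ) ^ (1 / q) ≤
      (∫⁻ b, ((∫⁻ a, f a b ^ q ∂μ) ^ (1 / q)) ^ p ∂ν) ^ (1 / p) := by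
  have hq : 0 < q := by linarith
  have h := minkowski μ ν (fun a b => f a b ^ p) (hf.pow_const p) (r := q / p)
    (by rw [le_div_iff₀ hp]; linarith)
  have h' := ENNReal.rpow_le_rpow h (z := 1 / p) (by positivity)
  refine le_trans (le_of_eq ?_) (h'.trans (le_of_eq ?_))
  · rw [← ENNReal.rpow_mul]
    congr 1
    · congr 1; ext a
      rw [← ENNReal.rpow_mul]; congr 1; field_simp
    · field_simp
  · congr 2; ext b
    rw [← ENNReal.rpow_mul]
    congr 1
    · congr 1; ext a
      rw [← ENNReal.rpow_mul]; congr 1; field_simp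
    · field_simp


noncomputable abbrev μI : Measure ℝ := volume.restrict (Set.Icc (0 : ℝ) 1)

noncomputable def ee (x : ℝ) : ℂ := Complex.exp (2 * (Real.pi : ℂ) * Complex.I * (x : ℂ))

noncomputable def FT (g : ℝ → ℂ) (x : ℝ) : ℂ := ∫ s, ee (x * s) * g s ∂μI

instance : IsProbabilityMeasure μI := ⟨by simp⟩

theorem ee_norm (x : ℝ) : ‖ee x‖ = 1 := by
  rw [ee, show 2 * (Real.pi : ℂ) * Complex.I * (x : ℂ) = ((2 * Real.pi * x : ℝ) : ℂ) * Complex.I by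
    push_cast; ring]
  exact Complex.norm_exp_ofReal_mul_I _

theorem ee_enorm (x : ℝ) : ‖ee x‖ₑ = 1 := by
  rw [← ofReal_norm, ee_norm]; simp

theorem ee_add (x y : ℝ) : ee (x + y) = ee x * ee y := by
  rw [ee, ee, ee, ← Complex.exp_add]; congr 1; push_cast; ring

theorem ee_zero : ee 0 = 1 := by simp [ee]

theorem ee_cont : Continuous ee := by unfold ee; fun_prop

theorem ee_meas : Measurable ee := ee_cont.measurable

theorem ee_conj (x : ℝ) : (starRingEnd ℂ) (ee x) = ee (-x) := by
  rw [ee, ee, ← Complex.exp_conj]; congr 1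
  simp [Complex.conj_ofNat]

/-- bounded measurable -/
def BM {α : Type*} [MeasurableSpace α] (g : α → ℂ) : Prop :=
  Measurable g ∧ ∃ B : ℝ, ∀ x, ‖g x‖ ≤ B

theorem BM.integrable {α : Type*} [MeasurableSpace α] {g : α → ℂ} (hg : BM g) (μ : Measure α)
    [IsFiniteMeasure μ] : Integrable g μ := by
  obtain ⟨h1, B, hB⟩ := hg
  exact Integrable.of_bound h1.aestronglyMeasurable B (Filter.Eventually.of_forall hB)

theorem BM.mul {α : Type*} [MeasurableSpace α] {g h : α → ℂ} (hg : BM g) (hh : BM h) :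
    BM (fun x => g x * h x) := by
  obtain ⟨h1, B, hB⟩ := hg
  obtain ⟨h2, D, hD⟩ := hh
  refine ⟨h1.mul h2, B * D, fun x => ?_⟩
  rw [norm_mul]
  exact mul_le_mul (hB x) (hD x) (norm_nonneg _) ((norm_nonneg _).trans (hB x))

theorem BM.comp {α β : Type*} [MeasurableSpace α] [MeasurableSpace β] {g : α → ℂ} (hg : BM g)
    {u : β → α} (hu : Measurable u) : BM (fun x => g (u x)) :=
  ⟨hg.1.comp hu, hg.2.choose, fun _ => hg.2.choose_spec _⟩

theorem BM_ee {α : Type*} [MeasurableSpace α] {u : α → ℝ} (hu : Measurable u) :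
    BM (fun x => ee (u x)) :=
  ⟨ee_meas.comp hu, 1, fun _ => (ee_norm _).le⟩

theorem BM.conj {α : Type*} [MeasurableSpace α] {g : α → ℂ} (hg : BM g) :
    BM (fun x => (starRingEnd ℂ) (g x)) :=
  ⟨Complex.continuous_conj.measurable.comp hg.1, hg.2.choose, fun x => by
    simpa using hg.2.choose_spec x⟩

theorem BM.indicator {α : Type*} [MeasurableSpace α] {g : α → ℂ} (hg : BM g) {s : Set α}
    (hs : MeasurableSet s) : BM (s.indicator g) := by
  refine ⟨hg.1.indicator hs, hg.2.choose, fun x => ?_⟩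
  exact (norm_indicator_le_norm_self _ _).trans (hg.2.choose_spec x)

theorem BM.integral_right {α β : Type*} [MeasurableSpace α] [MeasurableSpace β]
    {g : α → β → ℂ} (hg : BM (Function.uncurry g)) (μ : Measure β) [IsProbabilityMeasure μ] :
    BM (fun x => ∫ y, g x y ∂μ) := by
  obtain ⟨h1, B, hB⟩ := hg
  refine ⟨(h1.stronglyMeasurable.integral_prod_right (ν := μ)).measurable, B, fun x => ?_⟩
  refine (norm_integral_le_of_norm_le_const (C := B) (Filter.Eventually.of_forall fun y =>
    hB (x, y))).trans ?_
  simp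

theorem FT_BM {g : ℝ → ℂ} (hg : BM g) : BM (FT g) := by
  refine BM.integral_right (g := fun x s => ee (x * s) * g s) ?_ μI
  exact (BM_ee (u := fun z : ℝ × ℝ => z.1 * z.2) (measurable_fst.mul measurable_snd)).mul
    (hg.comp measurable_snd)

theorem parseval_fiber {g : ℝ → ℂ} (hg : BM g) (x : ℝ) :
    ∑' n : ℤ, ‖FT g (x + n)‖ₑ ^ 2 = ∫⁻ s, ‖g s‖ₑ ^ 2 ∂μI := by
  have hab : (0 : ℝ) < 1 := one_pos
  have hb : BM (fun s => ee (x * s) * g s) :=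
    (BM_ee (measurable_const.mul measurable_id)).mul hg
  have hL2 : MemLp (fun s => ee (x * s) * g s) 2 (volume.restrict (Set.Ioc (0 : ℝ) 1)) := by
    obtain ⟨h1, B, hB⟩ := hb
    exact MemLp.of_bound h1.aestronglyMeasurable B (Filter.Eventually.of_forall hB)
  have h := hasSum_sq_fourierCoeffOn hab hL2
  have hco : ∀ n : ℤ, fourierCoeffOn hab (fun s => ee (x * s) * g s) n = FT g (x + (-n : ℤ)) := by
    intro n
    rw [fourierCoeffOn_eq_integral, intervalIntegral.integral_of_le zero_le_one, FT,
      ← integral_Icc_eq_integral_Ioc]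
    simp only [sub_zero, div_one, one_smul]
    congr 1; ext s
    rw [smul_eq_mul, ← mul_assoc]
    congr 1
    rw [add_mul, ee_add, mul_comm]
    congr 1
    have := @fourier_coe_apply (1 - 0) (-n) s
    rw [this, ee]
    congr 1
    push_cast; ring
  simp_rw [hco] at h
  have h0 : (1 - 0 : ℝ)⁻¹ • ∫ s in (0:ℝ)..1, ‖ee (x * s) * g s‖ ^ 2 = ∫ s, ‖g s‖ ^ 2 ∂μI := by
    rw [intervalIntegral.integral_of_le zero_le_one, integral_Icc_eq_integral_Ioc]
    simp [ee_norm]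
  rw [h0] at h
  have h' : HasSum (fun i : ℤ => ‖FT g (x + (i : ℤ))‖ ^ 2) (∫ s, ‖g s‖ ^ 2 ∂μI) := by
    have := (Equiv.neg ℤ).hasSum_iff.2 h
    simpa [Function.comp_def] using this
  have h2 := ENNReal.ofReal_tsum_of_nonneg (fun i => by positivity) h'.summable
  rw [h'.tsum_eq] at h2
  have h3 : ∀ n : ℤ, ‖FT g (x + n)‖ₑ ^ 2 = ENNReal.ofReal (‖FT g (x + n)‖ ^ 2) := by
    intro n
    rw [ENNReal.ofReal_pow (norm_nonneg _), ofReal_norm]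
  simp_rw [h3]
  rw [← h2, ofReal_integral_eq_lintegral_ofReal]
  · congr 1; ext s
    rw [ENNReal.ofReal_pow (norm_nonneg _), ofReal_norm]
  · obtain ⟨h1, B, hB⟩ := hg
    refine Integrable.of_bound (h1.norm.pow_const 2).aestronglyMeasurable (B ^ 2)
      (Filter.Eventually.of_forall fun s => ?_)
    rw [Real.norm_of_nonneg (by positivity)]
    exact pow_le_pow_left₀ (norm_nonneg _) (hB s) 2
  · exact Filter.Eventually.of_forall fun s => by positivity

theorem lintegral_eq_tsum_int (h : ℝ → ℝ≥0∞) (hh : Measurable h) :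
    ∫⁻ x, h x = ∫⁻ x in Set.Ioc (0:ℝ) 1, ∑' n : ℤ, h (x + n) := by
  rw [lintegral_tsum (f := fun (n : ℤ) x => h (x + n))
    (fun n => (hh.comp (measurable_id.add_const _)).aemeasurable)]
  rw [← setLIntegral_univ, ← iUnion_Ioc_intCast ℝ, lintegral_iUnion
    (fun n => measurableSet_Ioc) (Set.pairwise_disjoint_Ioc_intCast ℝ)]
  congr 1; ext n
  rw [← lintegral_indicator measurableSet_Ioc, ← lintegral_indicator measurableSet_Ioc,
    ← lintegral_add_right_eq_self _ (n : ℝ)]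
  congr 1; ext x
  simp only [Set.indicator, Set.mem_Ioc]
  congr 1
  apply propext
  constructor <;> rintro ⟨h1, h2⟩ <;> constructor <;> linarith

theorem plancherel {g : ℝ → ℂ} (hg : BM g) :
    ∫⁻ x, ‖FT g x‖ₑ ^ 2 = ∫⁻ s, ‖g s‖ₑ ^ 2 ∂μI := by
  rw [lintegral_eq_tsum_int _ ((FT_BM hg).1.enorm.pow_const 2)]
  simp_rw [parseval_fiber hg]
  simp

theorem FT_enorm_le (g : ℝ → ℂ) (x : ℝ) : ‖FT g x‖ₑ ≤ ∫⁻ s, ‖g s‖ₑ ∂μI := by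
  refine (enorm_integral_le_lintegral_enorm _).trans (le_of_eq ?_)
  congr 1; ext s
  rw [enorm_mul, ee_enorm, one_mul]


theorem lintegral_rpow_Ioc {c A : ℝ} (hc : -1 < c) (hA : 0 ≤ A) :
    ∫⁻ t in Set.Ioc 0 A, ENNReal.ofReal (t ^ c) = ENNReal.ofReal (A ^ (c + 1) / (c + 1)) := by
  rw [← ofReal_integral_eq_lintegral_ofReal]
  · rw [← intervalIntegral.integral_of_le hA, integral_rpow (Or.inl hc),
      Real.zero_rpow (by linarith), sub_zero]
  · rw [← IntegrableOn, ← intervalIntegrable_iff_integrableOn_Ioc_of_le hA]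
    exact intervalIntegral.intervalIntegrable_rpow' hc
  · filter_upwards [self_mem_ae_restrict measurableSet_Ioc] with t ht
    exact Real.rpow_nonneg ht.1.le _

theorem FT_add {g h : ℝ → ℂ} (hg : BM g) (hh : BM h) (x : ℝ) :
    FT (fun s => g s + h s) x = FT g x + FT h x := by
  simp only [FT]
  rw [← integral_add]
  · simp only [mul_add]
  · exact ((BM_ee (measurable_const.mul measurable_id)).mul hg).integrable _
  · exact ((BM_ee (measurable_const.mul measurable_id)).mul hh).integrable _

theorem HY_level {b : ℝ} (hb : 2 < b) {g : ℝ → ℂ} (hg : BM g) {M : ℝ} (hM : 0 < M)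
    (hgM : ∫⁻ s, ‖g s‖ₑ ^ (b / (b - 1)) ∂μI = ENNReal.ofReal M) {t : ℝ} (ht : 0 < t) :
    volume {x | t < ‖FT g x‖} ≤ ENNReal.ofReal (4 / t ^ 2) *
      ∫⁻ s, {s | ‖g s‖ ≤ (t / (2 * M)) ^ (-(b - 1))}.indicator (fun s => ‖g s‖ₑ ^ 2) s ∂μI := by
  set τ : ℝ := (t / (2 * M)) ^ (-(b - 1)) with hτ
  have hτ0 : 0 < τ := by positivity
  set S : Set ℝ := {s | ‖g s‖ ≤ τ} with hS
  have hSm : MeasurableSet S := measurableSet_le hg.1.norm measurable_const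
  have hg1 : BM (S.indicator g) := hg.indicator hSm
  have hg2 : BM (Sᶜ.indicator g) := hg.indicator hSm.compl
  have hb1 : b - 1 ≠ 0 := by linarith
  have hsplit : ∀ x, FT g x = FT (S.indicator g) x + FT (Sᶜ.indicator g) x := by
    intro x
    rw [← FT_add hg1 hg2]
    congr 1; ext s
    exact congrFun (Set.indicator_self_add_compl S g).symm s
  have htail : ∀ x, ‖FT (Sᶜ.indicator g) x‖ₑ ≤ ENNReal.ofReal (t / 2) := by
    intro x
    refine (FT_enorm_le _ _).trans ?_
    calc ∫⁻ s, ‖Sᶜ.indicator g s‖ₑ ∂μI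
        ≤ ∫⁻ s, ‖g s‖ₑ ^ (b / (b - 1)) * ENNReal.ofReal (t / (2 * M)) ∂μI := by
          apply lintegral_mono
          intro s
          by_cases hs : s ∈ S
          · simp [hs]
          · simp only [Set.indicator_of_mem (show s ∈ Sᶜ from hs)]
            have hlt : τ < ‖g s‖ := by simpa [hS] using hs
            have hgp : 0 < ‖g s‖ := hτ0.trans hlt
            rw [← ofReal_norm, ENNReal.ofReal_rpow_of_pos hgp,
              ← ENNReal.ofReal_mul (by positivity)]
            apply ENNReal.ofReal_le_ofReal
            have h1 : ‖g s‖ ^ (-(b - 1)⁻¹) ≤ t / (2 * M) := by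
              have h2 : τ ^ (-(b - 1)⁻¹) = t / (2 * M) := by
                rw [hτ, ← Real.rpow_mul (by positivity)]
                have : -(b - 1) * -(b - 1)⁻¹ = 1 := by field_simp
                rw [this, Real.rpow_one]
              rw [← h2]
              apply Real.rpow_le_rpow_of_nonpos hτ0 hlt.le
              have : 0 < (b - 1)⁻¹ := by apply inv_pos.2; linarith
              linarith
            calc ‖g s‖ = ‖g s‖ ^ (b / (b - 1)) * ‖g s‖ ^ (-(b - 1)⁻¹) := by
                  rw [← Real.rpow_add hgp]
                  have : b / (b - 1) + -(b - 1)⁻¹ = 1 := by field_simp; ring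
                  rw [this, Real.rpow_one]
              _ ≤ _ := by gcongr
      _ = ENNReal.ofReal (t / 2) := by
          rw [lintegral_mul_const _ (hg.1.enorm.pow_const _), hgM, ← ENNReal.ofReal_mul hM.le]
          congr 1; field_simp
  have hsub : {x | t < ‖FT g x‖} ⊆
      {x | ENNReal.ofReal ((t / 2) ^ 2) ≤ ‖FT (S.indicator g) x‖ₑ ^ 2} := by
    intro x hx
    simp only [Set.mem_ofPred_eq] at hx ⊢
    rw [← ofReal_norm, ← ENNReal.ofReal_pow (norm_nonneg _)]
    apply ENNReal.ofReal_le_ofReal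
    have h1 := htail x
    rw [← ofReal_norm, ENNReal.ofReal_le_ofReal_iff (by positivity)] at h1
    have h2 := norm_add_le (FT (S.indicator g) x) (FT (Sᶜ.indicator g) x)
    rw [← hsplit x] at h2
    apply pow_le_pow_left₀ (by positivity)
    linarith
  refine (measure_mono hsub).trans ?_
  have h0 : ENNReal.ofReal ((t / 2) ^ 2) ≠ 0 := by
    simp only [ne_eq, ENNReal.ofReal_eq_zero, not_le]; positivity
  refine (meas_ge_le_lintegral_div ((FT_BM hg1).1.enorm.pow_const 2).aemeasurable h0
    ENNReal.ofReal_ne_top).trans ?_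
  rw [plancherel hg1, ENNReal.div_eq_inv_mul, ← ENNReal.ofReal_inv_of_pos (by positivity)]
  apply le_of_eq
  congr 1
  · congr 1; field_simp; norm_num
  · congr 1; ext s
    by_cases hs : s ∈ S <;> simp [hs]

theorem HY0 {b : ℝ} (hb : 2 < b) : ∃ C : ℝ≥0∞, C ≠ ∞ ∧ ∀ g : ℝ → ℂ, BM g →
    ∫⁻ x, ‖FT g x‖ₑ ^ b ≤ C * (∫⁻ s, ‖g s‖ₑ ^ (b / (b - 1)) ∂μI) ^ (b - 1) := by
  refine ⟨ENNReal.ofReal (b * (4 * (2 ^ (b - 2) / (b - 2)))), ENNReal.ofReal_ne_top,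
    fun g hg => ?_⟩
  have hb1 : 0 < b - 1 := by linarith
  have hb2 : 0 < b - 2 := by linarith
  set P := ∫⁻ s, ‖g s‖ₑ ^ (b / (b - 1)) ∂μI with hP
  have hPfin : P ≠ ∞ := by
    obtain ⟨h1, B, hB⟩ := hg
    have : P ≤ ∫⁻ s, (ENNReal.ofReal B) ^ (b / (b - 1)) ∂μI := by
      apply lintegral_mono; intro s
      dsimp only
      gcongr
      rw [← ofReal_norm]
      exact ENNReal.ofReal_le_ofReal (hB s)
    refine (this.trans_lt ?_).ne
    rw [lintegral_const, measure_univ, mul_one]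
    exact ENNReal.rpow_lt_top_of_nonneg (by positivity) ENNReal.ofReal_ne_top
  by_cases hP0 : P = 0
  · have hae : ∀ᵐ s ∂μI, ‖g s‖ₑ ^ (b / (b - 1)) = 0 :=
      (lintegral_eq_zero_iff (hg.1.enorm.pow_const _)).1 hP0
    have h0 : ∀ x, FT g x = 0 := by
      intro x
      have : (fun s => ee (x * s) * g s) =ᵐ[μI] fun _ => 0 := by
        filter_upwards [hae] with s hs
        rw [ENNReal.rpow_eq_zero_iff] at hs
        rcases hs with ⟨h, -⟩ | ⟨h, -⟩
        · simp [enorm_eq_zero.1 h]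
        · simp at h
      rw [FT, integral_congr_ae this]; simp
    simp [h0, show (0:ℝ) < b by linarith]
  set M := P.toReal with hMdef
  have hM : 0 < M := ENNReal.toReal_pos hP0 hPfin
  have hPM : P = ENNReal.ofReal M := (ENNReal.ofReal_toReal hPfin).symm
  have hlayer := lintegral_rpow_eq_lintegral_meas_lt_mul (volume : Measure ℝ)
    (f := fun x => ‖FT g x‖) (Filter.Eventually.of_forall fun x => norm_nonneg _)
    (FT_BM hg).1.norm.aemeasurable (p := b) (by linarith)
  have h1 : ∫⁻ x, ‖FT g x‖ₑ ^ b = ∫⁻ x, ENNReal.ofReal (‖FT g x‖ ^ b) := by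
    congr 1; ext x
    rw [← ENNReal.ofReal_rpow_of_nonneg (norm_nonneg _) (by linarith), ofReal_norm]
  rw [h1, hlayer, ENNReal.ofReal_mul (by linarith), mul_assoc]
  gcongr
  have hmeas : Measurable (fun z : ℝ × ℝ => ENNReal.ofReal (4 * z.1 ^ (b - 3)) *
      {s | ‖g s‖ ≤ (z.1 / (2 * M)) ^ (-(b - 1))}.indicator (fun s => ‖g s‖ₑ ^ 2) z.2) := by
    apply Measurable.mul
    · fun_prop
    · have : (fun z : ℝ × ℝ => {s | ‖g s‖ ≤ (z.1 / (2 * M)) ^ (-(b - 1))}.indicator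
          (fun s => ‖g s‖ₑ ^ 2) z.2) = {z : ℝ × ℝ | ‖g z.2‖ ≤ (z.1 / (2 * M)) ^ (-(b - 1))}.indicator
          (fun z => ‖g z.2‖ₑ ^ 2) := by
        ext z; rfl
      rw [this]
      have hgm := hg.1
      apply Measurable.indicator
      · fun_prop
      · apply measurableSet_le <;> fun_prop
  calc ∫⁻ t in Set.Ioi (0:ℝ), volume {x | t < ‖FT g x‖} * ENNReal.ofReal (t ^ (b - 1))
      ≤ ∫⁻ t in Set.Ioi (0:ℝ), ∫⁻ s, ENNReal.ofReal (4 * t ^ (b - 3)) *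
        {s | ‖g s‖ ≤ (t / (2 * M)) ^ (-(b - 1))}.indicator (fun s => ‖g s‖ₑ ^ 2) s ∂μI := by
        apply setLIntegral_mono' measurableSet_Ioi
        intro t ht
        have ht : 0 < t := ht
        rw [lintegral_const_mul]
        · refine (mul_le_mul' (HY_level hb hg hM (hP.symm.trans hPM) ht) le_rfl).trans
            (le_of_eq ?_)
          rw [mul_right_comm, ← ENNReal.ofReal_mul (by positivity)]
          congr 2
          rw [show b - 1 = (b - 3) + (2:ℕ) by push_cast; ring, Real.rpow_add_natCast ht.ne']
          field_simp
        · apply (hg.1.enorm.pow_const 2).indicator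
          exact measurableSet_le hg.1.norm measurable_const
    _ = ∫⁻ s, (∫⁻ t in Set.Ioi (0:ℝ), ENNReal.ofReal (4 * t ^ (b - 3)) *
        {s | ‖g s‖ ≤ (t / (2 * M)) ^ (-(b - 1))}.indicator (fun s => ‖g s‖ₑ ^ 2) s) ∂μI := by
        rw [lintegral_lintegral_swap hmeas.aemeasurable]
    _ ≤ ∫⁻ s, ENNReal.ofReal (4 * (2 ^ (b - 2) / (b - 2)) * M ^ (b - 2)) *
          ‖g s‖ₑ ^ (b / (b - 1)) ∂μI := by
        apply lintegral_mono
        intro s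
        dsimp only
        by_cases hgs : g s = 0
        · simp [hgs, Set.indicator]
        have hgp : 0 < ‖g s‖ := norm_pos_iff.2 hgs
        set A : ℝ := 2 * M * ‖g s‖ ^ (-(b - 1)⁻¹) with hA
        have hA0 : 0 < A := by positivity
        calc _ ≤ ∫⁻ t in Set.Ioi (0:ℝ), (Set.Ioc 0 A).indicator
                (fun t => ENNReal.ofReal (t ^ (b - 3)) * (4 * ‖g s‖ₑ ^ 2)) t := by
              apply setLIntegral_mono'  measurableSet_Ioi
              intro t ht
              have ht : 0 < t := ht
              by_cases hc : ‖g s‖ ≤ (t / (2 * M)) ^ (-(b - 1))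
              · have : t ∈ Set.Ioc 0 A := by
                  refine ⟨ht, ?_⟩
                  have h3 := Real.rpow_le_rpow_of_nonpos hgp hc (z := -(b - 1)⁻¹)
                    (by have := inv_pos.2 hb1; linarith)
                  rw [← Real.rpow_mul (by positivity)] at h3
                  have h4 : -(b - 1) * -(b - 1)⁻¹ = 1 := by field_simp
                  rw [h4, Real.rpow_one, div_le_iff₀ (by positivity)] at h3
                  rw [hA]; linarith
                rw [Set.indicator_of_mem this, Set.indicator_of_mem (show s ∈ {s | ‖g s‖ ≤ (t / (2 * M)) ^ (-(b - 1))} from hc),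
                  mul_comm 4, ENNReal.ofReal_mul (by positivity), mul_assoc]
                simp
              · rw [Set.indicator_of_notMem (show s ∉ {s | ‖g s‖ ≤ (t / (2 * M)) ^ (-(b - 1))} from hc)]; simp
          _ = (∫⁻ t in Set.Ioc 0 A, ENNReal.ofReal (t ^ (b - 3))) * (4 * ‖g s‖ₑ ^ 2) := by
              rw [setLIntegral_indicator measurableSet_Ioc,
                Set.inter_eq_left.2 (fun t ht => ht.1), lintegral_mul_const]
              fun_prop
          _ = _ := by
              rw [lintegral_rpow_Ioc (by linarith) hA0.le, ← ofReal_norm,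
                ← ENNReal.ofReal_pow hgp.le, ENNReal.ofReal_rpow_of_pos hgp,
                show (4 : ℝ≥0∞) = ENNReal.ofReal 4 by simp,
                ← ENNReal.ofReal_mul (by norm_num), ← ENNReal.ofReal_mul (by
                  apply div_nonneg (by positivity); linarith),
                ← ENNReal.ofReal_mul (by positivity)]
              congr 1
              rw [hA, show b - 3 + 1 = b - 2 by ring, Real.mul_rpow (by positivity) (by positivity),
                Real.mul_rpow (by positivity) (by positivity), ← Real.rpow_mul hgp.le,
                ← Real.rpow_natCast ‖g s‖ 2]
              have : b / (b - 1) = -(b - 1)⁻¹ * (b - 2) + (2 : ℕ) := by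
                push_cast; field_simp; ring
              rw [this, Real.rpow_add hgp]
              field_simp
    _ = _ := by
        rw [lintegral_const_mul _ (hg.1.enorm.pow_const _), ← hP, ENNReal.ofReal_mul (by positivity),
          mul_assoc, hPM, ENNReal.ofReal_rpow_of_pos hM, ← ENNReal.ofReal_mul (by positivity)]
        congr 2
        rw [← Real.rpow_add_one hM.ne']; congr 1; ring

theorem HY {b p : ℝ} (hb : 2 < b) (hbp : 1 / p + 1 / b = 1) :
    ∃ C : ℝ≥0∞, C ≠ ∞ ∧ ∀ g : ℝ → ℂ, BM g →
    (∫⁻ x, ‖FT g x‖ₑ ^ b) ^ (1 / b) ≤ C * (∫⁻ s, ‖g s‖ₑ ^ p ∂μI) ^ (1 / p) := by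
  obtain ⟨C, hC, h⟩ := HY0 hb
  have hb1 : b - 1 ≠ 0 := by linarith
  have hb0 : b ≠ 0 := by linarith
  have hp : 1 / p = (b - 1) / b := by
    have : 1 / p = 1 - 1 / b := by linarith
    rw [this]; field_simp
  have hp' : p = b / (b - 1) := by
    have := congrArg (fun x => 1 / x) hp
    simpa using this
  refine ⟨C ^ (1 / b), ENNReal.rpow_ne_top_of_nonneg (by positivity) hC, fun g hg => ?_⟩
  refine (ENNReal.rpow_le_rpow (h g hg) (by positivity)).trans (le_of_eq ?_)
  rw [ENNReal.mul_rpow_of_nonneg _ _ (by positivity), ← ENNReal.rpow_mul, hp, hp']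
  congr 2
  field_simp


noncomputable def Kk (γ u : ℝ) : ℝ≥0∞ := ENNReal.ofReal (|u| ^ (-γ))

theorem Kk_meas (γ : ℝ) : Measurable (Kk γ) := by
  unfold Kk; fun_prop

theorem Kk_neg (γ u : ℝ) : Kk γ (-u) = Kk γ u := by simp [Kk]

theorem lp_mono {α : Type*} [MeasurableSpace α] (μ : Measure α) [IsProbabilityMeasure μ]
    {p q : ℝ} (hp : 0 < p) (hpq : p ≤ q) {h : α → ℝ≥0∞} (hh : Measurable h) :
    (∫⁻ s, h s ^ p ∂μ) ^ (1 / p) ≤ (∫⁻ s, h s ^ q ∂μ) ^ (1 / q) := by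
  have := eLpNorm'_le_eLpNorm'_of_exponent_le hp hpq μ (f := h) hh.aestronglyMeasurable
  simpa [eLpNorm'] using this

theorem Kk_int {c : ℝ} (hc : c < 1) : ∃ D : ℝ≥0∞, D ≠ ∞ ∧
    ∀ s ∈ Set.Icc (0:ℝ) 1, ∫⁻ s', Kk c (s - s') ∂μI ≤ D := by
  set K2 : ℝ → ℝ≥0∞ := (Set.Ioc (0:ℝ) 1).indicator (fun u => ENNReal.ofReal (u ^ (-c))) with hK2
  have hK2m : Measurable K2 := by
    apply Measurable.indicator _ measurableSet_Ioc; fun_prop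
  set K3 : ℝ → ℝ≥0∞ := ({0} : Set ℝ).indicator (fun _ => Kk c 0) with hK3
  have hK3m : Measurable K3 := by
    apply Measurable.indicator _ (measurableSet_singleton _); fun_prop
  have hI2 : ∫⁻ u, K2 u ≠ ∞ := by
    rw [hK2, lintegral_indicator measurableSet_Ioc, lintegral_rpow_Ioc (by linarith) zero_le_one]
    exact ENNReal.ofReal_ne_top
  have hI3 : ∫⁻ u, K3 u = 0 := by
    rw [hK3, lintegral_indicator (measurableSet_singleton _)]
    simp
  refine ⟨∫⁻ u, (K2 u + K2 (-u) + K3 u), ?_, fun s hs => ?_⟩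
  · rw [lintegral_add_right _ hK3m, lintegral_add_left hK2m, hI3,
      lintegral_neg_eq_self K2, add_zero]
    exact ENNReal.add_ne_top.2 ⟨hI2, hI2⟩
  · rw [← lintegral_sub_left_eq_self (fun u => K2 u + K2 (-u) + K3 u) s, ← lintegral_indicator measurableSet_Icc]
    apply lintegral_mono
    intro s'
    dsimp only
    by_cases h : s' ∈ Set.Icc (0:ℝ) 1
    · rw [Set.indicator_of_mem h]
      rcases lt_trichotomy (s - s') 0 with h0 | h0 | h0
      · have hm : -(s - s') ∈ Set.Ioc (0:ℝ) 1 := ⟨by linarith, by linarith [hs.1, h.2]⟩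
        have : K2 (-(s - s')) = Kk c (s - s') := by
          rw [hK2, Set.indicator_of_mem hm, Kk, abs_of_neg h0]
        rw [← this]
        exact le_trans le_add_self le_self_add
      · have : K3 (s - s') = Kk c (s - s') := by
          rw [h0, hK3]; simp
        rw [← this]
        exact le_add_self
      · have hm : (s - s') ∈ Set.Ioc (0:ℝ) 1 := ⟨by linarith, by linarith [hs.2, h.1]⟩
        have : K2 ((s - s')) = Kk c (s - s') := by
          rw [hK2, Set.indicator_of_mem hm, Kk, abs_of_pos h0]
        rw [← this]
        exact le_trans le_self_add le_self_add
    · rw [Set.indicator_of_notMem h]; exact zero_le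

theorem HLS1 {γ a : ℝ} (hγ0 : 0 ≤ γ) (ha1 : 1 < a) (ha2 : a < 2)
    (h : 1 / a < 1 - γ / 2) : ∃ C : ℝ≥0∞, C ≠ ∞ ∧ ∀ g : ℝ → ℝ≥0∞, Measurable g →
    ∫⁻ s, (∫⁻ s', g s * g s' * Kk γ (s - s') ∂μI) ∂μI ≤ C * (∫⁻ s, g s ^ a ∂μI) ^ (2 / a) := by
  have ha0 : 0 < a := by linarith
  have ha0' : a ≠ 0 := by linarith
  have h2a : 2 * a - 2 ≠ 0 := by linarith
  have h2a' : (2:ℝ) - a ≠ 0 := by linarith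
  have h2a'' : 0 < 2 * a - 2 := by linarith
  set ρ : ℝ := a / (2 * a - 2) with hρ
  have hρ0 : 0 < ρ := by positivity
  have hγρ : γ * ρ < 1 := by
    rw [hρ, mul_div_assoc', div_lt_one h2a'']
    have := mul_lt_mul_of_pos_left h ha0
    field_simp at this
    linarith
  obtain ⟨D, hD, hK⟩ := Kk_int hγρ
  have hKm := Kk_meas γ
  have hpow : ∀ u, Kk γ u ^ ρ = Kk (γ * ρ) u := by
    intro u
    rw [Kk, Kk, ENNReal.ofReal_rpow_of_nonneg (by positivity) hρ0.le, ← Real.rpow_mul (abs_nonneg _)]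
    congr 2; ring
  refine ⟨2 * D ^ (1 / ρ), ENNReal.mul_ne_top (by simp) (ENNReal.rpow_ne_top_of_nonneg (by positivity) hD),
    fun g hg => ?_⟩
  have hconj : (a / (2 - a)).HolderConjugate ρ := by
    rw [Real.holderConjugate_iff]
    constructor
    · rw [lt_div_iff₀ (by linarith)]; linarith
    · rw [hρ]; field_simp; ring
  have key : ∀ s ∈ Set.Icc (0:ℝ) 1, ∫⁻ s', g s' ^ (2 - a) * Kk γ (s - s') ∂μI ≤
      (∫⁻ s, g s ^ a ∂μI) ^ ((2 - a) / a) * D ^ (1 / ρ) := by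
    intro s hs
    refine (ENNReal.lintegral_mul_le_Lp_mul_Lq μI hconj (hg.pow_const _).aemeasurable
      (by fun_prop)).trans ?_
    have e1 : ∀ s', (g s' ^ (2 - a)) ^ (a / (2 - a)) = g s' ^ a := by
      intro s'
      rw [← ENNReal.rpow_mul]; congr 1; field_simp
    simp_rw [e1, hpow]
    have e2 : 1 / (a / (2 - a)) = (2 - a) / a := by field_simp
    rw [e2]
    gcongr
    exact hK s hs
  have h1 : ∫⁻ s, (∫⁻ s', g s ^ a * (g s' ^ (2 - a) * Kk γ (s - s')) ∂μI) ∂μI ≤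
      D ^ (1 / ρ) * (∫⁻ s, g s ^ a ∂μI) ^ (2 / a) := by
    calc _ ≤ ∫⁻ s, g s ^ a * ((∫⁻ s, g s ^ a ∂μI) ^ ((2 - a) / a) * D ^ (1 / ρ)) ∂μI := by
          apply setLIntegral_mono' measurableSet_Icc
          intro s hs
          rw [lintegral_const_mul _ (by fun_prop)]
          gcongr
          exact key s hs
      _ = _ := by
          rw [lintegral_mul_const _ (by fun_prop), ← mul_assoc, mul_comm]
          congr 1
          conv_lhs => rw [← ENNReal.rpow_one (∫⁻ s, g s ^ a ∂μI)]
          rw [← ENNReal.rpow_mul, ← ENNReal.rpow_add_of_nonneg]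
          · congr 1; field_simp; ring
          · norm_num
          · rw [one_mul]; apply div_nonneg <;> linarith
  have h2 : ∫⁻ s, (∫⁻ s', g s' ^ a * (g s ^ (2 - a) * Kk γ (s - s')) ∂μI) ∂μI ≤
      D ^ (1 / ρ) * (∫⁻ s, g s ^ a ∂μI) ^ (2 / a) := by
    rw [lintegral_lintegral_swap (by fun_prop)]
    convert h1 using 6 with s s'
    rw [← Kk_neg, neg_sub]
  have hpt : ∀ x y : ℝ≥0∞, y ≤ x → x * y ≤ x ^ a * y ^ (2 - a) := by
    intro x y hxy
    calc x * y = x * (y ^ (a - 1) * y ^ (2 - a)) := by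
          rw [← ENNReal.rpow_add_of_nonneg _ _ (by linarith) (by linarith),
            show a - 1 + (2 - a) = 1 by ring, ENNReal.rpow_one]
      _ ≤ x * (x ^ (a - 1) * y ^ (2 - a)) := by
          gcongr
      _ = _ := by
          rw [← mul_assoc]; congr 1
          conv_lhs => enter [1]; rw [← ENNReal.rpow_one x]
          rw [← ENNReal.rpow_add_of_nonneg _ _ (by linarith) (by linarith)]
          congr 1; ring
  calc _ ≤ ∫⁻ s, (∫⁻ s', (g s ^ a * (g s' ^ (2 - a) * Kk γ (s - s')) +
        g s' ^ a * (g s ^ (2 - a) * Kk γ (s - s'))) ∂μI) ∂μI := by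
        apply lintegral_mono; intro s; apply lintegral_mono; intro s'
        dsimp only
        rw [← mul_assoc, ← mul_assoc, ← add_mul]
        gcongr
        rcases le_total (g s') (g s) with h | h
        · exact (hpt _ _ h).trans le_self_add
        · rw [mul_comm]; exact (hpt _ _ h).trans le_add_self
    _ = ∫⁻ s, (∫⁻ s', g s ^ a * (g s' ^ (2 - a) * Kk γ (s - s')) ∂μI) ∂μI + 
        ∫⁻ s, (∫⁻ s', g s' ^ a * (g s ^ (2 - a) * Kk γ (s - s')) ∂μI) ∂μI := by
        rw [← lintegral_add_left]
        · congr 1; ext s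
          rw [lintegral_add_left (by fun_prop)]
        · apply Measurable.lintegral_prod_right'
            (f := fun z : ℝ × ℝ => g z.1 ^ a * (g z.2 ^ (2 - a) * Kk γ (z.1 - z.2)))
          fun_prop
    _ ≤ _ := by
        refine (add_le_add h1 h2).trans (le_of_eq ?_)
        ring

theorem HLS {γ a : ℝ} (hγ0 : 0 ≤ γ) (hγ1 : γ < 1) (ha0 : 0 < a)
    (h : 1 / a < 1 - γ / 2) : ∃ C : ℝ≥0∞, C ≠ ∞ ∧ ∀ g : ℝ → ℝ≥0∞, Measurable g →
    ∫⁻ s, (∫⁻ s', g s * g s' * Kk γ (s - s') ∂μI) ∂μI ≤ C * (∫⁻ s, g s ^ a ∂μI) ^ (2 / a) := by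
  have ha1 : 1 < a := by
    have : 1 / a < 1 := by linarith
    rwa [div_lt_one ha0] at this
  rcases lt_or_ge a 2 with h2 | h2
  · exact HLS1 hγ0 ha1 h2 h
  · set t : ℝ := (1 / 2 + (1 - γ / 2)) / 2 with ht
    have ht0 : 0 < t := by linarith
    have ht1 : 1 < 1 / t := by rw [lt_div_iff₀ ht0]; linarith
    have ht2 : 1 / t < 2 := by rw [div_lt_iff₀ ht0]; linarith
    obtain ⟨C, hC, H⟩ := HLS1 (γ := γ) (a := 1 / t) hγ0 ht1 ht2 (by rw [one_div_one_div]; linarith)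
    refine ⟨C, hC, fun g hg => (H g hg).trans ?_⟩
    gcongr
    have := lp_mono μI (p := 1 / t) (q := a) (by positivity) (by linarith) hg
    have := ENNReal.rpow_le_rpow this (show (0:ℝ) ≤ 2 by norm_num)
    rw [← ENNReal.rpow_mul, ← ENNReal.rpow_mul] at this
    rwa [show 1 / (1 / t) * 2 = 2 / (1 / t) by ring, show 1 / a * 2 = 2 / a by ring] at this

theorem lintegral_mul_shift {c : ℝ} (hc : c ≠ 0) (x : ℝ) {B : ℝ → ℝ≥0∞} (hB : Measurable B) :
    ∫⁻ y, B (x + y * c) = ENNReal.ofReal |c|⁻¹ * ∫⁻ y, B y := by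
  have h1 : ∫⁻ y, B (x + y * c) = ∫⁻ z, B (x + z) ∂(Measure.map (fun y => y * c) volume) := by
    rw [lintegral_map (by fun_prop) (by fun_prop)]
  rw [h1, Real.map_volume_mul_right hc, lintegral_smul_measure, lintegral_add_left_eq_self,
    abs_inv, smul_eq_mul]

theorem xray_pair {A B : ℝ → ℝ≥0∞} (hA : Measurable A) (hB : Measurable B) {s s' : ℝ}
    (h : s ≠ s') : ∫⁻ z : ℝ × ℝ, A (z.2 + z.1 * s) * B (z.2 + z.1 * s') =
    ENNReal.ofReal |s - s'|⁻¹ * ((∫⁻ x, A x) * ∫⁻ x, B x) := by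
  rw [Measure.volume_eq_prod, lintegral_prod _ (by fun_prop)]
  dsimp only
  have h1 : ∀ y, ∫⁻ x, A (x + y * s) * B (x + y * s') =
      ∫⁻ x, A x * B (x + y * (s' - s)) := by
    intro y
    rw [← lintegral_add_right_eq_self (fun x => A x * B (x + y * (s' - s))) (y * s)]
    congr 1; ext x
    congr 2; ring
  simp_rw [h1]
  rw [lintegral_lintegral_swap (by fun_prop)]
  have h2 : s' - s ≠ 0 := sub_ne_zero.2 h.symm
  have h3 : ∀ x, ∫⁻ y, A x * B (x + y * (s' - s)) =
      A x * (ENNReal.ofReal |s - s'|⁻¹ * ∫⁻ x, B x) := by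
    intro x
    rw [lintegral_const_mul _ (by fun_prop), lintegral_mul_shift h2 _ hB, abs_sub_comm]
  simp_rw [h3]
  rw [lintegral_mul_const _ hA]
  ring

theorem xray {p q p' : ℝ} (hp : 0 < p) (hp' : 0 < p') (h2 : 2 * p < q)
    (hh : 1 / p' < 1 / p - 1 / q) : ∃ C : ℝ≥0∞, C ≠ ∞ ∧ ∀ h : ℝ → ℝ → ℝ≥0∞,
    Measurable (Function.uncurry h) →
    (∫⁻ z : ℝ × ℝ, ((∫⁻ s, h s (z.2 + z.1 * s) ^ p ∂μI) ^ (1 / p)) ^ q) ^ (1 / q) ≤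
    C * (∫⁻ s, ((∫⁻ x, h s x ^ (q / 2)) ^ (2 / q)) ^ p' ∂μI) ^ (1 / p') := by
  have hq : 0 < q := by linarith
  set r := q / p with hr
  have hr2 : 2 < r := by rw [hr, lt_div_iff₀ hp]; linarith
  have hr0 : 0 < r := by linarith
  have hγ : 2 / r < 1 := by rw [div_lt_one hr0]; exact hr2
  obtain ⟨C, hC, H⟩ := HLS (γ := 2 / r) (a := p' / p) (by positivity) hγ (by positivity) (by
    rw [hr]
    have := mul_lt_mul_of_pos_left hh hp
    field_simp at this ⊢
    linarith)
  refine ⟨C ^ (1 / (2 * p)), ENNReal.rpow_ne_top_of_nonneg (by positivity) hC, fun h hm => ?_⟩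
  set N : ℝ → ℝ≥0∞ := fun s => (∫⁻ x, h s x ^ (q / 2)) ^ (2 * p / q) with hN
  have hmc : ∀ {α : Type} [MeasurableSpace α] (u v : α → ℝ), Measurable u → Measurable v →
      Measurable (fun a => h (u a) (v a)) := fun u v hu hv => hm.comp (hu.prodMk hv)
  have hNm : Measurable N := by
    apply Measurable.pow_const
    apply Measurable.lintegral_prod_right' (f := fun z : ℝ × ℝ => h z.1 z.2 ^ (q / 2))
    exact hm.pow_const _
  have hsq : ∀ z : ℝ × ℝ, ((∫⁻ s, h s (z.2 + z.1 * s) ^ p ∂μI) ^ (1 / p)) ^ q =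
      (∫⁻ b : ℝ × ℝ, h b.1 (z.2 + z.1 * b.1) ^ p * h b.2 (z.2 + z.1 * b.2) ^ p
        ∂(μI.prod μI)) ^ (r / 2) := by
    intro z
    rw [lintegral_prod_mul (f := fun s => h s (z.2 + z.1 * s) ^ p)
      (g := fun s => h s (z.2 + z.1 * s) ^ p), ← pow_two, ← ENNReal.rpow_natCast,
      ← ENNReal.rpow_mul, ← ENNReal.rpow_mul]
    · congr 1; rw [hr]; push_cast; field_simp
    · exact ((hmc _ _ (by fun_prop) (by fun_prop)).pow_const _).aemeasurable
    · exact ((hmc _ _ (by fun_prop) (by fun_prop)).pow_const _).aemeasurable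
  simp_rw [hsq]
  have hfm : Measurable (Function.uncurry fun (z b : ℝ × ℝ) =>
      h b.1 (z.2 + z.1 * b.1) ^ p * h b.2 (z.2 + z.1 * b.2) ^ p) := by
    apply Measurable.mul
    · exact (hmc (fun w : (ℝ × ℝ) × (ℝ × ℝ) => w.2.1) (fun w => w.1.2 + w.1.1 * w.2.1)
        (by fun_prop) (by fun_prop)).pow_const _
    · exact (hmc (fun w : (ℝ × ℝ) × (ℝ × ℝ) => w.2.2) (fun w => w.1.2 + w.1.1 * w.2.2)
        (by fun_prop) (by fun_prop)).pow_const _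
  have M := minkowski_mixed (volume : Measure (ℝ × ℝ)) (μI.prod μI) _ hfm one_pos
    (show (1:ℝ) ≤ r / 2 by linarith)
  simp only [ENNReal.rpow_one, div_one] at M
  have hne : ∀ᵐ b ∂(μI.prod μI), b.1 ≠ b.2 := by
    rw [ae_iff]
    simp only [ne_eq, not_not]
    have hmd : MeasurableSet {a : ℝ × ℝ | a.1 = a.2} := measurableSet_eq_fun measurable_fst measurable_snd
    rw [Measure.prod_apply hmd]
    have : ∀ x : ℝ, μI (Prod.mk x ⁻¹' {a : ℝ × ℝ | a.1 = a.2}) = 0 := by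
      intro x
      have : Prod.mk x ⁻¹' {a : ℝ × ℝ | a.1 = a.2} = {x} := by ext; simp [eq_comm]
      rw [this]; simp
    simp
  have hfin : (∫⁻ z : ℝ × ℝ, (∫⁻ b : ℝ × ℝ, h b.1 (z.2 + z.1 * b.1) ^ p * h b.2 (z.2 + z.1 * b.2) ^ p
        ∂(μI.prod μI)) ^ (r / 2)) ^ (1 / (r / 2)) ≤ C * (∫⁻ s, N s ^ (p' / p) ∂μI) ^ (2 / (p' / p)) := by
    refine M.trans ?_
    refine le_trans (le_of_eq ?_) (H N hNm)
    rw [← lintegral_prod (f := fun z : ℝ × ℝ => N z.1 * N z.2 * Kk (2 / r) (z.1 - z.2))]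
    · apply lintegral_congr_ae
      filter_upwards [hne] with b hb
      have e : ∀ a : ℝ × ℝ, (h b.1 (a.2 + a.1 * b.1) ^ p * h b.2 (a.2 + a.1 * b.2) ^ p) ^ (r / 2) =
          h b.1 (a.2 + a.1 * b.1) ^ (q / 2) * h b.2 (a.2 + a.1 * b.2) ^ (q / 2) := by
        intro a
        rw [ENNReal.mul_rpow_of_nonneg _ _ (by positivity), ← ENNReal.rpow_mul, ← ENNReal.rpow_mul]
        have : p * (r / 2) = q / 2 := by rw [hr]; field_simp
        rw [this]
      simp_rw [e]
      rw [xray_pair (A := fun x => h b.1 x ^ (q / 2)) (B := fun x => h b.2 x ^ (q / 2))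
        ((hmc _ _ (by fun_prop) (by fun_prop)).pow_const _)
        ((hmc _ _ (by fun_prop) (by fun_prop)).pow_const _) hb]
      rw [ENNReal.mul_rpow_of_nonneg _ _ (by positivity), ENNReal.mul_rpow_of_nonneg _ _ (by positivity)]
      have e2 : 1 / (r / 2) = 2 * p / q := by rw [hr]; field_simp
      have e3 : ENNReal.ofReal |b.1 - b.2|⁻¹ ^ (1 / (r / 2)) = Kk (2 / r) (b.1 - b.2) := by
        rw [Kk, ENNReal.ofReal_rpow_of_nonneg (by positivity) (by positivity),
          Real.inv_rpow (abs_nonneg _), ← Real.rpow_neg (abs_nonneg _)]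
        congr 3; field_simp
      rw [e3, e2, mul_comm]
    · have := Kk_meas (2 / r)
      fun_prop
  have hfin2 := ENNReal.rpow_le_rpow hfin (show (0:ℝ) ≤ 1 / (2 * p) by positivity)
  rw [← ENNReal.rpow_mul, ENNReal.mul_rpow_of_nonneg _ _ (by positivity), ← ENNReal.rpow_mul] at hfin2
  convert hfin2 using 2
  · rw [hr]; field_simp
  · congr 1
    · congr 1; ext s
      rw [hN, ← ENNReal.rpow_mul, ← ENNReal.rpow_mul]
      congr 1; field_simp
    · field_simp


noncomputable def kf (v : ℝ) : ℂ := if 0 < v then 1 else if v = 0 then 1 / 2 else 0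

theorem kf_meas : Measurable kf := by
  unfold kf
  refine Measurable.ite measurableSet_Ioi measurable_const ?_
  exact Measurable.ite (measurableSet_singleton 0) measurable_const measurable_const

theorem kf_norm (v : ℝ) : ‖kf v‖ ≤ 1 := by
  unfold kf; split_ifs <;> norm_num

theorem kf_conj (v : ℝ) : (starRingEnd ℂ) (kf v) = kf v := by
  unfold kf; split_ifs <;> simp [Complex.conj_ofNat]

theorem kf_add (v : ℝ) : kf v + kf (-v) = 1 := by
  unfold kf
  rcases lt_trichotomy v 0 with h | h | h
  · have h1 : ¬ 0 < v := by linarith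
    have h2 : v ≠ 0 := h.ne
    have h3 : 0 < -v := by linarith
    simp [h1, h2, h3]
  · subst h; norm_num
  · have h1 : ¬ v < 0 := by linarith
    have h2 : v ≠ 0 := h.ne'
    simp [h1, h2, h]

theorem kf_BM : BM kf := ⟨kf_meas, 1, kf_norm⟩

theorem para_sq {u : ℝ → ℂ} (hu : BM u) : ‖∫ s, u s ∂μI‖ₑ ^ 2 ≤
    2 * ‖∫ s', (∫ s, kf (s - s') * u s * (starRingEnd ℂ) (u s') ∂μI) ∂μI‖ₑ := by
  have hb : BM (Function.uncurry fun s' s => kf (s - s') * u s * (starRingEnd ℂ) (u s')) :=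
    ((kf_BM.comp (u := fun z : ℝ × ℝ => z.2 - z.1) (by fun_prop)).mul
      (hu.comp measurable_snd)).mul (hu.comp measurable_fst).conj
  have hb2 : BM (Function.uncurry fun s' s => kf (s' - s) * u s * (starRingEnd ℂ) (u s')) :=
    ((kf_BM.comp (u := fun z : ℝ × ℝ => z.1 - z.2) (by fun_prop)).mul
      (hu.comp measurable_snd)).mul (hu.comp measurable_fst).conj
  set A := ∫ s', (∫ s, kf (s - s') * u s * (starRingEnd ℂ) (u s') ∂μI) ∂μI with hA
  have h1 : (∫ s, u s ∂μI) * (starRingEnd ℂ) (∫ s, u s ∂μI) = A + (starRingEnd ℂ) A := by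
    have hc : (starRingEnd ℂ) A =
        ∫ s', (∫ s, kf (s' - s) * u s * (starRingEnd ℂ) (u s') ∂μI) ∂μI := by
      rw [integral_integral_swap (hb2.integrable _), hA, ← integral_conj]
      congr 1; ext s'
      rw [← integral_conj]
      congr 1; ext s
      rw [map_mul, map_mul, kf_conj, Complex.conj_conj]; ring
    rw [hc, hA, ← integral_add ((hb.integral_right μI).integrable _)
      ((hb2.integral_right μI).integrable _), ← integral_conj, mul_comm, ← integral_mul_const]
    congr 1; ext s'
    rw [← integral_const_mul, ← integral_add]
    · congr 1; ext s
      rw [← add_mul, ← add_mul, ← neg_sub s s', kf_add]; ring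
    · exact (hb.comp (u := fun s => (s', s)) (by fun_prop)).integrable _
    · exact (hb2.comp (u := fun s => (s', s)) (by fun_prop)).integrable _
  have h2 := congrArg (fun z => ‖z‖ₑ) h1
  simp only [enorm_mul, RCLike.enorm_conj] at h2
  rw [pow_two, h2]
  refine (enorm_add_le _ _).trans ?_
  rw [RCLike.enorm_conj, two_mul]

theorem para_A {u : ℝ → ℂ} (hu : BM u) :
    ∫ s', (∫ s, kf (s - s') * u s * (starRingEnd ℂ) (u s') ∂μI) ∂μI =
    ∫ v, (∫ s', kf v * (Set.Icc (0:ℝ) 1).indicator u (s' + v) * (starRingEnd ℂ) (u s') ∂μI) ∂μI := by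
  set U := (Set.Icc (0:ℝ) 1).indicator u with hU
  have hUb : BM U := hu.indicator measurableSet_Icc
  have hb : BM (Function.uncurry fun s' v => kf v * U (s' + v) * (starRingEnd ℂ) (u s')) :=
    ((kf_BM.comp (u := fun z : ℝ × ℝ => z.2) (by fun_prop)).mul
      (hUb.comp (u := fun z : ℝ × ℝ => z.1 + z.2) (by fun_prop))).mul (hu.comp measurable_fst).conj
  rw [← integral_integral_swap (hb.integrable _)]
  apply setIntegral_congr_fun measurableSet_Icc
  intro s' hs'
  dsimp only
  have h1 : ∫ s, kf (s - s') * u s * (starRingEnd ℂ) (u s') ∂μI =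
      ∫ s, kf (s - s') * U s * (starRingEnd ℂ) (u s') := by
    rw [← integral_indicator measurableSet_Icc]
    congr 1; ext s
    by_cases h : s ∈ Set.Icc (0:ℝ) 1 <;> simp [hU, h]
  rw [h1, ← integral_add_left_eq_self _ s',
    setIntegral_eq_integral_of_forall_compl_eq_zero]
  · congr 1; ext v
    rw [add_sub_cancel_left]
  · intro v hv
    by_cases h0 : v < 0
    · simp [kf, h0.le, h0.ne]
    · have : s' + v ∉ Set.Icc (0:ℝ) 1 := by
        rintro ⟨h1, h2⟩
        exact hv ⟨by linarith, by linarith [hs'.1]⟩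
      simp [hU, this]

theorem para_W {g : ℝ → ℂ} (x y v : ℝ) :
    ∫ s', kf v * (Set.Icc (0:ℝ) 1).indicator (fun s => ee (x * s + y * s ^ 2) * g s) (s' + v) *
      (starRingEnd ℂ) (ee (x * s' + y * s' ^ 2) * g s') ∂μI =
    ee (x * v) * (kf v * ee (y * v ^ 2) * FT (fun s' => (Set.Icc (0:ℝ) 1).indicator g (s' + v) *
      (starRingEnd ℂ) (g s')) (2 * y * v)) := by
  rw [FT, ← integral_const_mul, ← integral_const_mul]
  congr 1; ext s'
  rw [map_mul, ee_conj]
  by_cases h : s' + v ∈ Set.Icc (0:ℝ) 1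
  · rw [Set.indicator_of_mem h, Set.indicator_of_mem h]
    have : ee (x * (s' + v) + y * (s' + v) ^ 2) * ee (-(x * s' + y * s' ^ 2)) =
        ee (x * v) * ee (y * v ^ 2) * ee (2 * y * v * s') := by
      rw [← ee_add, ← ee_add, ← ee_add]; congr 1; ring
    linear_combination (kf v * g (s' + v) * (starRingEnd ℂ) (g s')) * this
  · rw [Set.indicator_of_notMem h, Set.indicator_of_notMem h]; ring

theorem parab {q p : ℝ} (hq : 4 < q) (hp : 0 < p) (hpq : 1 / p < 1 - 3 / q) :
    ∃ C : ℝ≥0∞, C ≠ ∞ ∧ ∀ g : ℝ → ℂ, BM g →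
    (∫⁻ y, ∫⁻ x, ‖∫ s, ee (x * s + y * s ^ 2) * g s ∂μI‖ₑ ^ q) ^ (1 / q) ≤
      C * (∫⁻ s, ‖g s‖ₑ ^ p ∂μI) ^ (1 / p) := by
  have hq2 : 0 < q - 2 := by linarith
  have hq0 : 0 < q := by linarith
  set b := q / 2 with hb
  have hb2 : 2 < b := by linarith
  have hb0 : 0 < b := by linarith
  set p1 := q / (q - 2) with hp1
  have hp10 : 0 < p1 := by positivity
  have hp1b : 1 / p1 + 1 / b = 1 := by rw [hp1, hb]; field_simp; ring
  have hp1leb : p1 ≤ b := by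
    rw [hp1, hb]; apply div_le_div_of_nonneg_left <;> linarith
  set γ := p1 / b with hγ
  have hγ' : γ = 2 / (q - 2) := by rw [hγ, hp1, hb]; field_simp
  have hγ0 : 0 < γ := by positivity
  have hγ1 : γ < 1 := by rw [hγ', div_lt_one hq2]; linarith
  obtain ⟨C1, hC1, H1⟩ := HY hb2 hp1b
  obtain ⟨C2, hC2, H2⟩ := HLS (γ := γ) (a := p / p1) hγ0.le hγ1 (by positivity) (by
    have : 1 / (p / p1) = p1 * (1 / p) := by field_simp
    rw [this]
    refine (mul_lt_mul_of_pos_left hpq hp10).trans_le (le_of_eq ?_)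
    rw [hγ', hp1]; field_simp; ring)
  refine ⟨(2 * C1 * (C1 ^ p1 * C2) ^ (1 / p1)) ^ (1 / 2 : ℝ), ?_, fun g hg => ?_⟩
  · apply ENNReal.rpow_ne_top_of_nonneg (by norm_num)
    apply ENNReal.mul_ne_top (ENNReal.mul_ne_top (by simp) hC1)
    apply ENNReal.rpow_ne_top_of_nonneg (by positivity)
    exact ENNReal.mul_ne_top (ENNReal.rpow_ne_top_of_nonneg hp10.le hC1) hC2
  set G := (Set.Icc (0:ℝ) 1).indicator g with hG
  have hGb : BM G := hg.indicator measurableSet_Icc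
  set H : ℝ → ℝ → ℂ := fun v s' => G (s' + v) * (starRingEnd ℂ) (g s') with hH
  have hHb : BM (Function.uncurry H) :=
    (hGb.comp (u := fun z : ℝ × ℝ => z.2 + z.1) (by fun_prop)).mul (hg.comp measurable_snd).conj
  have hHv : ∀ v, BM (H v) := fun v => hHb.comp (u := fun s => (v, s)) (by fun_prop)
  -- joint measurability of FT
  have hFb : BM (fun z : ℝ × ℝ => FT (H z.2) (2 * z.1 * z.2)) := by
    refine BM.integral_right (g := fun (z : ℝ × ℝ) s => ee (2 * z.1 * z.2 * s) * H z.2 s) ?_ μI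
    exact (BM_ee (u := fun w : (ℝ × ℝ) × ℝ => 2 * w.1.1 * w.1.2 * w.2) (by fun_prop)).mul
      (hHb.comp (u := fun w : (ℝ × ℝ) × ℝ => (w.1.2, w.2)) (by fun_prop))
  set W : ℝ → ℝ → ℂ := fun y v => kf v * ee (y * v ^ 2) * FT (H v) (2 * y * v) with hW
  have hWb : ∀ y, BM (W y) := fun y =>
    (kf_BM.mul (BM_ee (u := fun v => y * v ^ 2) (by fun_prop))).mul
      (hFb.comp (u := fun v => (y, v)) (by fun_prop))
  have hpt : ∀ x y, ‖∫ s, ee (x * s + y * s ^ 2) * g s ∂μI‖ₑ ^ q ≤ 2 ^ b * ‖FT (W y) x‖ₑ ^ b := by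
    intro x y
    have hu : BM (fun s => ee (x * s + y * s ^ 2) * g s) := (BM_ee (by fun_prop)).mul hg
    have h1 := para_sq hu
    rw [para_A hu] at h1
    simp_rw [para_W] at h1
    have h2 := ENNReal.rpow_le_rpow h1 hb0.le
    rw [ENNReal.mul_rpow_of_nonneg _ _ hb0.le, ← ENNReal.rpow_natCast, ← ENNReal.rpow_mul] at h2
    rw [show ((2:ℕ):ℝ) * b = q by rw [hb]; push_cast; ring] at h2
    exact h2
  set f : ℝ → ℝ → ℝ≥0∞ := fun y v => ‖FT (H v) (2 * y * v)‖ₑ with hf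
  have hfm : Measurable (Function.uncurry f) := hFb.1.enorm
  have hx : ∀ y, ∫⁻ x, ‖∫ s, ee (x * s + y * s ^ 2) * g s ∂μI‖ₑ ^ q ≤
      2 ^ b * (C1 ^ b * ((∫⁻ v, f y v ^ p1 ∂μI) ^ (1 / p1)) ^ b) := by
    intro y
    refine (lintegral_mono (hpt · y)).trans ?_
    rw [lintegral_const_mul _ ((FT_BM (hWb y)).1.enorm.pow_const _)]
    gcongr
    have := ENNReal.rpow_le_rpow (H1 (W y) (hWb y)) hb0.le
    rw [← ENNReal.rpow_mul, one_div_mul_cancel hb0.ne', ENNReal.rpow_one,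
      ENNReal.mul_rpow_of_nonneg _ _ hb0.le] at this
    refine this.trans ?_
    gcongr with v
    rw [hW, hf]
    dsimp only
    rw [enorm_mul, enorm_mul, ee_enorm, mul_one]
    refine mul_le_of_le_one_left zero_le ?_
    rw [← ofReal_norm]
    exact ENNReal.ofReal_le_one.2 (kf_norm v)
  have hfm2 : Measurable (fun y => (∫⁻ v, f y v ^ p1 ∂μI)) :=
    Measurable.lintegral_prod_right' (f := fun z : ℝ × ℝ => f z.1 z.2 ^ p1) (hfm.pow_const _)
  have hJ : ∫⁻ y, ∫⁻ x, ‖∫ s, ee (x * s + y * s ^ 2) * g s ∂μI‖ₑ ^ q ≤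
      2 ^ b * (C1 ^ b * ∫⁻ y, ((∫⁻ v, f y v ^ p1 ∂μI) ^ (1 / p1)) ^ b) := by
    refine (lintegral_mono hx).trans (le_of_eq ?_)
    rw [lintegral_const_mul _ (by fun_prop), lintegral_const_mul _ (by fun_prop)]
  have M := minkowski_mixed volume μI f hfm hp10 hp1leb
  have hv : ∀ᵐ v ∂μI, ((∫⁻ y, f y v ^ b) ^ (1 / b)) ^ p1 ≤
      C1 ^ p1 * ∫⁻ s', ‖g s'‖ₑ ^ p1 * (‖G (s' + v)‖ₑ ^ p1 * Kk γ v) ∂μI := by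
    have hne : ∀ᵐ v ∂μI, v ≠ 0 := by
      rw [ae_iff]; simp
    filter_upwards [hne, self_mem_ae_restrict measurableSet_Icc] with v hv0 hvI
    have hvp : 0 < v := lt_of_le_of_ne hvI.1 (Ne.symm hv0)
    have e1 : ∫⁻ y, f y v ^ b = ENNReal.ofReal |2 * v|⁻¹ * ∫⁻ y, ‖FT (H v) y‖ₑ ^ b := by
      rw [← lintegral_mul_shift (c := 2 * v) (by positivity) 0
        (B := fun y => ‖FT (H v) y‖ₑ ^ b) ((FT_BM (hHv v)).1.enorm.pow_const _)]
      congr 1; ext y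
      rw [hf]; dsimp only
      congr 4; ring
    have e2 : ENNReal.ofReal |2 * v|⁻¹ ^ (p1 / b) ≤ Kk γ v := by
      rw [ENNReal.ofReal_rpow_of_nonneg (by positivity) (by positivity), Kk]
      apply ENNReal.ofReal_le_ofReal
      rw [Real.inv_rpow (abs_nonneg _), ← Real.rpow_neg (abs_nonneg _), hγ]
      apply Real.rpow_le_rpow_of_nonpos (by positivity)
      · rw [abs_of_pos hvp, abs_of_pos (by positivity)]; linarith
      · rw [neg_nonpos]; positivity
    have e3 := ENNReal.rpow_le_rpow (H1 (H v) (hHv v)) hp10.le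
    rw [← ENNReal.rpow_mul, ENNReal.mul_rpow_of_nonneg _ _ hp10.le, ← ENNReal.rpow_mul,
      one_div_mul_cancel hp10.ne', ENNReal.rpow_one] at e3
    rw [← ENNReal.rpow_mul, e1, ENNReal.mul_rpow_of_nonneg _ _ (by positivity)]
    rw [show 1 / b * p1 = p1 / b by ring] at e3 ⊢
    refine (mul_le_mul' e2 e3).trans (le_of_eq ?_)
    rw [← mul_assoc, mul_comm (Kk γ v), mul_assoc, ← lintegral_const_mul _
      ((hHv v).1.enorm.pow_const _)]
    congr 2; ext s'
    rw [hH]; dsimp only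
    rw [enorm_mul, RCLike.enorm_conj, ENNReal.mul_rpow_of_nonneg _ _ hp10.le]
    ring
  have hKm := Kk_meas γ
  have hgm := hg.1
  have hGm := hGb.1
  have hmain : ∫⁻ v, ((∫⁻ y, f y v ^ b) ^ (1 / b)) ^ p1 ∂μI ≤
      C1 ^ p1 * (C2 * (∫⁻ s, ‖g s‖ₑ ^ p ∂μI) ^ (2 / (p / p1))) := by
    have hm2 : Measurable (fun z : ℝ × ℝ => ‖g z.2‖ₑ ^ p1 * (‖G (z.2 + z.1)‖ₑ ^ p1 * Kk γ z.1)) := by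
      fun_prop
    refine (lintegral_mono_ae hv).trans ?_
    rw [lintegral_const_mul _ (Measurable.lintegral_prod_right' hm2)]
    gcongr
    rw [lintegral_lintegral_swap hm2.aemeasurable]
    have h3 := H2 (fun s => ‖g s‖ₑ ^ p1) (by fun_prop)
    have e : ∀ s, (‖g s‖ₑ ^ p1) ^ (p / p1) = ‖g s‖ₑ ^ p := by
      intro s; rw [← ENNReal.rpow_mul]; congr 1; field_simp
    simp_rw [e] at h3
    refine le_trans ?_ h3
    apply lintegral_mono
    intro s'
    dsimp only
    simp_rw [mul_assoc]
    rw [lintegral_const_mul _ (by fun_prop), lintegral_const_mul _ (by fun_prop)]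
    refine mul_le_mul' le_rfl ?_
    refine (setLIntegral_le_lintegral _ _).trans ?_
    rw [← lintegral_indicator measurableSet_Icc, ← lintegral_add_left_eq_self
      ((Set.Icc (0:ℝ) 1).indicator fun a => ‖g a‖ₑ ^ p1 * Kk γ (s' - a)) s']
    apply lintegral_mono
    intro v
    by_cases h : s' + v ∈ Set.Icc (0:ℝ) 1
    · dsimp only
      rw [Set.indicator_of_mem h, hG, Set.indicator_of_mem h, sub_add_cancel_left, Kk_neg]
    · simp [hG, Set.indicator_of_notMem h, hp10]
  have hJ2 := ENNReal.rpow_le_rpow hJ (show 0 ≤ 1 / b by positivity)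
  rw [ENNReal.mul_rpow_of_nonneg _ _ (by positivity), ENNReal.mul_rpow_of_nonneg _ _ (by positivity),
    ← ENNReal.rpow_mul, ← ENNReal.rpow_mul, mul_one_div_cancel hb0.ne', ENNReal.rpow_one,
    ENNReal.rpow_one] at hJ2
  have hJ3 := hJ2.trans (mul_le_mul' le_rfl (mul_le_mul' le_rfl (M.trans
    (ENNReal.rpow_le_rpow hmain (by positivity)))))
  have hJ4 := ENNReal.rpow_le_rpow hJ3 (show (0:ℝ) ≤ 1 / 2 by positivity)
  rw [← ENNReal.rpow_mul, show 1 / b * (1 / 2) = 1 / q by rw [hb]; field_simp] at hJ4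
  refine hJ4.trans (le_of_eq ?_)
  rw [← mul_assoc (C1 ^ p1), ENNReal.mul_rpow_of_nonneg (C1 ^ p1 * C2) _ (by positivity),
    ← mul_assoc, ← mul_assoc, ENNReal.mul_rpow_of_nonneg _ _ (by positivity)]
  congr 1
  rw [← ENNReal.rpow_mul, ← ENNReal.rpow_mul]
  congr 1; field_simp


section NL
variable {ι : Type} [DecidableEq ι]

/-- one-variable `L^p` norm in the `i`-th variable (`p = 0`: identity) -/
noncomputable def Nop (i : ι) (p : ℝ) (G : (ι → ℝ) → ℝ≥0∞) (ξ : ι → ℝ) : ℝ≥0∞ :=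
  if p = 0 then G ξ else (∫⁻ s, G (Function.update ξ i s) ^ p ∂μI) ^ (1 / p)

/-- iterated mixed norm -/
noncomputable def NL (p : ι → ℝ) : List ι → ((ι → ℝ) → ℝ≥0∞) → (ι → ℝ) → ℝ≥0∞
  | [], G => G
  | i :: l, G => Nop i (p i) (NL p l G)

theorem NL_append (p : ι → ℝ) (A B : List ι) (G : (ι → ℝ) → ℝ≥0∞) :
    NL p (A ++ B) G = NL p A (NL p B G) := by
  induction A with
  | nil => rfl
  | cons i l ih => simp only [List.cons_append, NL, ih]

theorem NL_congr {p p' : ι → ℝ} {l : List ι} (h : ∀ i ∈ l, p i = p' i) (G : (ι → ℝ) → ℝ≥0∞) :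
    NL p l G = NL p' l G := by
  induction l with
  | nil => rfl
  | cons i l ih =>
    simp only [NL]
    rw [ih (fun j hj => h j (by simp [hj])), h i (by simp)]

theorem NL_absent {p : ι → ℝ} {l : List ι} (h : ∀ i ∈ l, p i = 0) (G : (ι → ℝ) → ℝ≥0∞) :
    NL p l G = G := by
  induction l with
  | nil => rfl
  | cons i l ih =>
    simp only [NL]
    rw [ih (fun j hj => h j (by simp [hj])), h i (by simp)]
    ext ξ; simp [Nop]

theorem NL_mono {p : ι → ℝ} (hp : ∀ i, 0 ≤ p i) (l : List ι) {G G' : (ι → ℝ) → ℝ≥0∞}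
    (ξ : ι → ℝ) (h : ∀ ξ', (∀ i, i ∉ l → ξ' i = ξ i) → G ξ' ≤ G' ξ') :
    NL p l G ξ ≤ NL p l G' ξ := by
  induction l generalizing ξ with
  | nil => exact h ξ (fun _ _ => rfl)
  | cons i l ih =>
    simp only [NL, Nop]
    split_ifs with h0
    · exact ih ξ (fun ξ' h' => h ξ' (fun j hj => h' j (by simp at hj; exact hj.2)))
    · have : ∀ s, NL p l G (Function.update ξ i s) ≤ NL p l G' (Function.update ξ i s) := by
        intro s
        refine ih _ (fun ξ' h' => h ξ' (fun j hj => ?_))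
        simp at hj
        rw [h' j hj.2, Function.update_of_ne hj.1]
      have hpi := hp i
      have : (∫⁻ s, NL p l G (Function.update ξ i s) ^ p i ∂μI) ≤
        (∫⁻ s, NL p l G' (Function.update ξ i s) ^ p i ∂μI) :=
        lintegral_mono fun s => ENNReal.rpow_le_rpow (this s) hpi
      exact ENNReal.rpow_le_rpow this (by positivity)

theorem NL_mono' {p : ι → ℝ} (hp : ∀ i, 0 ≤ p i) (l : List ι) {G G' : (ι → ℝ) → ℝ≥0∞}
    (h : ∀ ξ', G ξ' ≤ G' ξ') (ξ : ι → ℝ) : NL p l G ξ ≤ NL p l G' ξ :=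
  NL_mono hp l ξ (fun ξ' _ => h ξ')

theorem NL_local {p : ι → ℝ} (hp : ∀ i, 0 ≤ p i) (l : List ι) {G G' : (ι → ℝ) → ℝ≥0∞}
    (ξ : ι → ℝ) (h : ∀ ξ', (∀ i, i ∉ l → ξ' i = ξ i) → G ξ' = G' ξ') :
    NL p l G ξ = NL p l G' ξ :=
  le_antisymm (NL_mono hp l ξ fun ξ' h' => (h ξ' h').le) (NL_mono hp l ξ fun ξ' h' => (h ξ' h').ge)

theorem Nop_const {i : ι} {p : ℝ} (hp : 0 ≤ p) {C : ℝ≥0∞} (hC : C ≠ ∞) (G : (ι → ℝ) → ℝ≥0∞)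
    (ξ : ι → ℝ) : Nop i p (fun ξ => C * G ξ) ξ = C * Nop i p G ξ := by
  simp only [Nop]
  split_ifs with h0
  · rfl
  · simp_rw [ENNReal.mul_rpow_of_nonneg _ _ hp]
    rw [lintegral_const_mul' _ _ (ENNReal.rpow_ne_top_of_nonneg hp hC),
      ENNReal.mul_rpow_of_nonneg _ _ (by positivity), ← ENNReal.rpow_mul, mul_one_div_cancel h0,
      ENNReal.rpow_one]

theorem NL_const {p : ι → ℝ} (hp : ∀ i, 0 ≤ p i) (l : List ι) {C : ℝ≥0∞} (hC : C ≠ ∞)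
    (G : (ι → ℝ) → ℝ≥0∞) : NL p l (fun ξ => C * G ξ) = fun ξ => C * NL p l G ξ := by
  induction l with
  | nil => rfl
  | cons i l ih =>
    simp only [NL]
    rw [ih]; ext ξ
    exact Nop_const (hp i) hC _ _

theorem meas_update {α : Type*} [MeasurableSpace α] {u : α → ι → ℝ} {v : α → ℝ} (i : ι)
    (hu : Measurable u) (hv : Measurable v) :
    Measurable (fun a => Function.update (u a) i (v a)) :=
  measurable_update'.comp (hu.prodMk hv)

theorem Nop_meas {α : Type*} [MeasurableSpace α] (i : ι) (p : ℝ) {G : α → (ι → ℝ) → ℝ≥0∞}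
    (hG : Measurable (Function.uncurry G)) :
    Measurable (Function.uncurry fun a => Nop i p (G a)) := by
  by_cases h : p = 0
  · have : (fun a => Nop i p (G a)) = G := by ext a ξ; simp [Nop, h]
    rw [this]; exact hG
  · have : Function.uncurry (fun a => Nop i p (G a)) = fun z : α × (ι → ℝ) =>
      (∫⁻ s, G z.1 (Function.update z.2 i s) ^ p ∂μI) ^ (1 / p) := by
      ext z; simp [Function.uncurry, Nop, h]
    rw [this]
    apply Measurable.pow_const
    apply Measurable.lintegral_prod_right'
      (f := fun w : (α × (ι → ℝ)) × ℝ => G w.1.1 (Function.update w.1.2 i w.2) ^ p)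
    apply Measurable.pow_const
    exact hG.comp ((measurable_fst.comp measurable_fst).prodMk
      (meas_update i (measurable_snd.comp measurable_fst) measurable_snd))

theorem NL_meas {α : Type*} [MeasurableSpace α] (p : ι → ℝ) (l : List ι)
    {G : α → (ι → ℝ) → ℝ≥0∞} (hG : Measurable (Function.uncurry G)) :
    Measurable (Function.uncurry fun a => NL p l (G a)) := by
  induction l with
  | nil => exact hG
  | cons i l ih => exact Nop_meas i (p i) ih

theorem NL_meas1 (p : ι → ℝ) (l : List ι)
    {G : (ι → ℝ) → ℝ≥0∞} (hG : Measurable G) : Measurable (NL p l G) :=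
  (NL_meas (α := Unit) p l (G := fun _ => G) (hG.comp measurable_snd)).comp
    (measurable_const.prodMk measurable_id (f := fun _ => ()))

theorem NL_push {α : Type*} [MeasurableSpace α] (μ : Measure α) [SigmaFinite μ]
    {p : ι → ℝ} (hp : ∀ i, 0 ≤ p i) {b : ℝ} (l : List ι) (hpb : ∀ i ∈ l, p i ≤ b)
    {G : α → (ι → ℝ) → ℝ≥0∞} (hG : Measurable (Function.uncurry G)) (ξ : ι → ℝ) :
    (∫⁻ a, NL p l (G a) ξ ^ b ∂μ) ^ (1 / b) ≤
      NL p l (fun ξ => (∫⁻ a, G a ξ ^ b ∂μ) ^ (1 / b)) ξ := by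
  induction l generalizing ξ with
  | nil => exact le_rfl
  | cons i l ih =>
    have ih' := ih (fun j hj => hpb j (by simp [hj]))
    simp only [NL, Nop]
    split_ifs with h0
    · exact ih' ξ
    · have hpi : 0 < p i := lt_of_le_of_ne (hp i) (Ne.symm h0)
      refine (minkowski_mixed μ μI (fun a s => NL p l (G a) (Function.update ξ i s)) ?_ hpi
        (hpb i (by simp))).trans ?_
      · exact (NL_meas p l hG).comp (measurable_fst.prodMk
          (meas_update i measurable_const measurable_snd))
      · refine ENNReal.rpow_le_rpow ?_ (by positivity)
        apply lintegral_mono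
        intro s
        exact ENNReal.rpow_le_rpow (ih' _) hpi.le

theorem NL_out {p : ι → ℝ} (hp : ∀ i, 0 ≤ p i) {c : ι} {s₀ : ℝ} (hs : 0 < s₀) (l : List ι)
    (hc : c ∉ l) (hl : ∀ i ∈ l, p i = 0 ∨ s₀ ≤ p i) {G : (ι → ℝ) → ℝ≥0∞} (hG : Measurable G)
    (ξ : ι → ℝ) : NL p l (Nop c s₀ G) ξ ≤ Nop c s₀ (NL p l G) ξ := by
  induction l generalizing ξ with
  | nil => exact le_rfl
  | cons i l ih =>
    have ih' := ih (by simp at hc; exact hc.2) (fun j hj => hl j (by simp [hj]))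
    have hci : c ≠ i := by simp at hc; exact hc.1
    rcases hl i (by simp) with h0 | h0
    · simp only [NL]
      have : ∀ H : (ι → ℝ) → ℝ≥0∞, Nop i (p i) H = H := by intro H; ext ξ; simp [Nop, h0]
      rw [this, this]; exact ih' ξ
    · have hpi : 0 < p i := hs.trans_le h0
      simp only [NL]
      calc Nop i (p i) (NL p l (Nop c s₀ G)) ξ ≤ Nop i (p i) (Nop c s₀ (NL p l G)) ξ :=
            NL_mono' (p := fun _ => p i) (fun _ => hp i) [i] ih' ξ
        _ ≤ _ := by
          simp only [Nop, hpi.ne', hs.ne', if_false]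
          refine (minkowski_mixed μI μI (fun a s => NL p l G
            (Function.update (Function.update ξ i a) c s)) ?_ hs h0).trans (le_of_eq ?_)
          · exact (NL_meas1 p l hG).comp (meas_update c (meas_update i measurable_const
              measurable_fst) measurable_snd)
          · simp_rw [Function.update_comm hci]

theorem Nop_lp {i : ι} {p P : ℝ} (hp : 0 ≤ p) (hP : p ≤ P) (hp0 : p ≠ 0) {G : (ι → ℝ) → ℝ≥0∞}
    (hG : Measurable G) (ξ : ι → ℝ) : Nop i p G ξ ≤ Nop i P G ξ := by
  have h1 : 0 < p := lt_of_le_of_ne hp (Ne.symm hp0)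
  have h2 : P ≠ 0 := (h1.trans_le hP).ne'
  simp only [Nop, hp0, h2, if_false]
  exact lp_mono μI h1 hP (hG.comp (meas_update i measurable_const measurable_id))

theorem NL_final [Fintype ι] {p : ι → ℝ} {P : ℝ} (hP : 0 < P) (l : List ι) (hl : l.Nodup)
    (h0 : ∀ i ∈ l, 0 < p i) (hp : ∀ i ∈ l, p i ≤ P) {G : (ι → ℝ) → ℝ≥0∞} (hG : Measurable G)
    (ξ : ι → ℝ) : NL p l G ξ ≤ ((∫⋯∫⁻_l.toFinset, (fun ξ => G ξ ^ P) ∂(fun _ : ι => μI)) ξ) ^ (1 / P) := by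
  induction l generalizing ξ with
  | nil =>
    simp [NL, lmarginal_empty, ← ENNReal.rpow_mul, hP.ne']
  | cons i l ih =>
    have ih' := ih (List.nodup_cons.1 hl).2 (fun j hj => h0 j (by simp [hj]))
      (fun j hj => hp j (by simp [hj]))
    simp only [NL]
    refine (Nop_lp (h0 i (by simp)).le (hp i (by simp)) (h0 i (by simp)).ne' (NL_meas1 p l hG) ξ).trans ?_
    rw [List.toFinset_cons, lmarginal_insert _ (hG.pow_const _) (by simp [(List.nodup_cons.1 hl).1])]
    simp only [Nop, hP.ne', if_false]
    refine ENNReal.rpow_le_rpow ?_ (by positivity)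
    apply lintegral_mono
    intro s
    refine (ENNReal.rpow_le_rpow (ih' _) hP.le).trans ?_
    rw [← ENNReal.rpow_mul, one_div_mul_cancel hP.ne', ENNReal.rpow_one]

end NL


section Step
variable {ι : Type} [DecidableEq ι]

theorem slice_BM {g : (ι → ℝ) → ℂ} (hg : BM g) (c : ι) (ξ : ι → ℝ) :
    BM (fun s => g (Function.update ξ c s)) :=
  hg.comp (meas_update c measurable_const measurable_id)

theorem slice_int_meas {α : Type*} [MeasurableSpace α] {g : (ι → ℝ) → ℂ} (hg : BM g) (c : ι)
    {φ : α → (ι → ℝ) → ℝ → ℝ}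
    (hφ : Measurable (fun w : (α × (ι → ℝ)) × ℝ => φ w.1.1 w.1.2 w.2)) :
    Measurable (Function.uncurry fun a ξ =>
      ‖∫ s, ee (φ a ξ s) * g (Function.update ξ c s) ∂μI‖ₑ) := by
  have : BM (fun z : α × (ι → ℝ) => ∫ s, ee (φ z.1 z.2 s) * g (Function.update z.2 c s) ∂μI) := by
    refine BM.integral_right (g := fun (z : α × (ι → ℝ)) s =>
      ee (φ z.1 z.2 s) * g (Function.update z.2 c s)) ?_ μI
    refine (BM_ee hφ).mul (hg.comp ?_)
    exact meas_update c (measurable_snd.comp measurable_fst) measurable_snd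
  exact this.1.enorm

theorem Nop_pos {i : ι} {p : ℝ} (hp : 0 < p) (G : (ι → ℝ) → ℝ≥0∞) (ξ : ι → ℝ) :
    Nop i p G ξ = (∫⁻ s, G (Function.update ξ i s) ^ p ∂μI) ^ (1 / p) := by
  simp [Nop, hp.ne']

/-- generic root step -/
theorem step_root {α : Type} [MeasurableSpace α] (μ : Measure α) [SigmaFinite μ] {q : ℝ}
    {p p' : ι → ℝ} (hp : ∀ i, 0 ≤ p i) {A B : List ι} {c : ι} (hpA : ∀ i ∈ A, p i ≤ q)
    (hpc : p c = 0) (hB : ∀ i ∈ B, p i = 0) (hB' : ∀ i ∈ B, p' i = 0)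
    (hA' : ∀ i ∈ A, p i = p' i) (hp'c : 0 < p' c)
    (φ : α → ℝ → ℝ) (hφ : Measurable (Function.uncurry φ)) {C : ℝ≥0∞} (hC : C ≠ ∞)
    (H : ∀ g : ℝ → ℂ, BM g → (∫⁻ a, ‖∫ s, ee (φ a s) * g s ∂μI‖ₑ ^ q ∂μ) ^ (1 / q) ≤
      C * (∫⁻ s, ‖g s‖ₑ ^ p' c ∂μI) ^ (1 / p' c)) {g : (ι → ℝ) → ℂ} (hg : BM g) (ξ : ι → ℝ) :
    (∫⁻ a, NL p (A ++ c :: B) (fun ξ => ‖∫ s, ee (φ a s) * g (Function.update ξ c s) ∂μI‖ₑ) ξ ^ q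
      ∂μ) ^ (1 / q) ≤ C * NL p' (A ++ c :: B) (fun ξ => ‖g ξ‖ₑ) ξ := by
  have e1 : ∀ G : (ι → ℝ) → ℝ≥0∞, NL p (A ++ c :: B) G = NL p A G := by
    intro G
    rw [NL_append, NL_absent (l := c :: B)]
    intro i hi
    rcases List.mem_cons.1 hi with h | h
    · rw [h]; exact hpc
    · exact hB i h
  simp_rw [e1]
  rw [NL_append, NL, NL_absent hB', ← NL_congr hA']
  refine (NL_push μ hp A hpA (slice_int_meas hg c (φ := fun a _ s => φ a s) ?_) ξ).trans ?_
  · exact hφ.comp ((measurable_fst.comp measurable_fst).prodMk measurable_snd)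
  have e2 := congrFun (NL_const hp A hC (Nop c (p' c) fun ξ => ‖g ξ‖ₑ)) ξ
  rw [← e2]
  refine NL_mono' hp A (fun ξ' => ?_) ξ
  rw [Nop_pos hp'c]
  exact H _ (slice_BM hg c ξ')

theorem child_local {p : ι → ℝ} (hp : ∀ i, 0 ≤ p i) (B : List ι) {l : ι} (hlB : l ∉ B) (c : ι)
    (g : (ι → ℝ) → ℂ) (ξ' : ι → ℝ) (z : ℝ × ℝ) (s : ℝ) : NL p B (fun ξ =>
        ‖∫ s, ee (z.2 * s + z.1 * ξ l * s) * g (Function.update ξ c s) ∂μI‖ₑ)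
        (Function.update ξ' l s) = NL p B (fun ξ =>
    ‖∫ t, ee ((z.2 + z.1 * s) * t) * g (Function.update ξ c t) ∂μI‖ₑ) (Function.update ξ' l s) := by
  refine NL_local hp B _ (fun ξ'' h'' => ?_)
  have : ξ'' l = s := by rw [h'' l hlB, Function.update_self]
  rw [this]
  congr 2
  ext t
  rw [add_mul]

theorem step_child {q : ℝ} (hq : 4 < q) {pl pl' s₀ : ℝ} (hpl : 0 < pl) (hpl' : 0 < pl')
    (h2 : 2 * pl < q) (hh : 1 / pl' < 1 / pl - 1 / q) (hs₀ : 1 / s₀ + 1 / (q / 2) = 1)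
    (hs₀' : 0 < s₀) :
    ∃ C : ℝ≥0∞, C ≠ ∞ ∧ ∀ (p p' : ι → ℝ) (A B1 B2 : List ι) (l c : ι), (∀ i, 0 ≤ p i) →
      p l = pl → p' l = pl' → p c = 0 → p' c = s₀ → (∀ i ∈ A, p i = p' i) →
      (∀ i ∈ B1, p i = p' i) → (∀ i ∈ B2, p i = p' i) →
      (∀ i ∈ A, p i ≤ q) → (∀ i ∈ B1 ++ c :: B2, p i ≤ q / 2) →
      (∀ i ∈ B2, p i = 0 ∨ s₀ ≤ p i) → (A ++ l :: (B1 ++ c :: B2)).Nodup →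
      ∀ g : (ι → ℝ) → ℂ, BM g → ∀ ξ,
      (∫⁻ z : ℝ × ℝ, NL p (A ++ l :: (B1 ++ c :: B2)) (fun ξ =>
        ‖∫ s, ee (z.2 * s + z.1 * ξ l * s) * g (Function.update ξ c s) ∂μI‖ₑ) ξ ^ q) ^ (1 / q)
        ≤ C * NL p' (A ++ l :: (B1 ++ c :: B2)) (fun ξ => ‖g ξ‖ₑ) ξ := by
  obtain ⟨C1, hC1, H1⟩ := HY (b := q / 2) (by linarith) hs₀
  obtain ⟨C2, hC2, H2⟩ := xray hpl hpl' h2 hh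
  refine ⟨C2 * C1, ENNReal.mul_ne_top hC2 hC1, ?_⟩
  intro p p' A B1 B2 l c hp hpl1 hpl1' hpc hpc' hA hB1 hB2 hAq hBq hB2s hnd g hg ξ
  obtain ⟨B, hB⟩ : ∃ B, B = B1 ++ c :: B2 := ⟨_, rfl⟩
  rw [← hB] at hBq hnd ⊢
  have hnd2 := List.nodup_append.1 hnd
  have hlB : l ∉ B := (List.nodup_cons.1 hnd2.2.1).1
  have hcB2 : c ∉ B2 := by
    rw [hB] at hnd2
    have := (List.nodup_append.1 (List.nodup_cons.1 hnd2.2.1).2).2.1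
    exact (List.nodup_cons.1 this).1
  have hgm : Measurable (fun ξ => ‖g ξ‖ₑ) := hg.1.enorm
  obtain ⟨Hu, hHu⟩ : ∃ Hu : ℝ → (ι → ℝ) → ℝ≥0∞, Hu = fun u ξ =>
    ‖∫ s, ee (u * s) * g (Function.update ξ c s) ∂μI‖ₑ := ⟨_, rfl⟩
  have hHum : Measurable (Function.uncurry Hu) := by
    rw [hHu]
    exact slice_int_meas hg c (φ := fun u _ s => u * s) (by fun_prop)
  have hq0 : 0 < q := by linarith
  -- inner estimate
  have inner : ∀ ξ', (∫⁻ z : ℝ × ℝ, (Nop l (p l) (NL p B (fun ξ =>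
        ‖∫ s, ee (z.2 * s + z.1 * ξ l * s) * g (Function.update ξ c s) ∂μI‖ₑ)) ξ') ^ q) ^ (1 / q) ≤
        (C2 * C1) * Nop l (p' l) (NL p' B (fun ξ => ‖g ξ‖ₑ)) ξ' := by
    intro ξ'
    rw [hpl1, hpl1', Nop_pos hpl']
    simp_rw [Nop_pos hpl]
    obtain ⟨h, hh⟩ : ∃ h : ℝ → ℝ → ℝ≥0∞, h = fun s u => NL p B (Hu u) (Function.update ξ' l s) :=
      ⟨_, rfl⟩
    have hhm : Measurable (Function.uncurry h) := by
      rw [hh]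
      exact      (NL_meas p B hHum).comp (measurable_snd.prodMk (meas_update l measurable_const measurable_fst))
    have e1 : ∀ (z : ℝ × ℝ) (s : ℝ), NL p B (fun ξ =>
        ‖∫ s, ee (z.2 * s + z.1 * ξ l * s) * g (Function.update ξ c s) ∂μI‖ₑ)
        (Function.update ξ' l s) = h s (z.2 + z.1 * s) := by
      intro z s
      rw [hh, hHu]
      exact child_local hp B hlB c g ξ' z s
    simp_rw [e1]
    refine (H2 h hhm).trans ?_
    rw [mul_assoc]
    refine mul_le_mul' le_rfl ?_
    have e2 : ∀ s, (∫⁻ x, h s x ^ (q / 2)) ^ (2 / q) ≤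
        C1 * NL p' B (fun ξ => ‖g ξ‖ₑ) (Function.update ξ' l s) := by
      intro s
      rw [hh]; dsimp only
      have := NL_push volume hp (b := q / 2) B hBq hHum (Function.update ξ' l s)
      rw [one_div_div] at this
      refine this.trans ?_
      have e3 : ∀ ξ, (∫⁻ a, Hu a ξ ^ (q / 2)) ^ (2 / q) ≤ C1 * Nop c s₀ (fun ξ => ‖g ξ‖ₑ) ξ := by
        intro ξ
        have := H1 _ (slice_BM hg c ξ)
        rw [hHu]; dsimp only
        rw [one_div_div] at this
        rw [Nop_pos hs₀']
        exact this
      refine (NL_mono' hp B e3 _).trans ?_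
      rw [NL_const hp B hC1]
      refine mul_le_mul' le_rfl ?_
      rw [hB, NL_append, NL_append, ← NL_congr hB1]
      refine NL_mono' hp B1 (fun ξ'' => ?_) _
      simp only [NL]
      rw [hpc, hpc', ← NL_congr hB2]
      simp only [Nop, if_true]
      have := NL_out hp hs₀' B2 hcB2 hB2s hgm ξ''
      simpa only [Nop] using this
    calc (∫⁻ s, ((∫⁻ x, h s x ^ (q / 2)) ^ (2 / q)) ^ pl' ∂μI) ^ (1 / pl') ≤
        (∫⁻ s, (C1 * NL p' B (fun ξ => ‖g ξ‖ₑ) (Function.update ξ' l s)) ^ pl' ∂μI) ^ (1 / pl') := by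
          refine ENNReal.rpow_le_rpow ?_ (by positivity)
          exact lintegral_mono fun s => ENNReal.rpow_le_rpow (e2 s) hpl'.le
      _ = _ := by
          have := Nop_const (i := l) hpl'.le hC1 (NL p' B (fun ξ => ‖g ξ‖ₑ)) ξ'
          rw [Nop_pos hpl', Nop_pos hpl'] at this
          exact this
  simp_rw [NL_append p A, NL_append p' A]
  have hm : Measurable (Function.uncurry fun (z : ℝ × ℝ) (ξ : ι → ℝ) =>
      ‖∫ s, ee (z.2 * s + z.1 * ξ l * s) * g (Function.update ξ c s) ∂μI‖ₑ) :=
    slice_int_meas hg c (φ := fun (z : ℝ × ℝ) ξ s => z.2 * s + z.1 * ξ l * s) (by fun_prop)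
  refine (NL_push volume hp A hAq (NL_meas p (l :: B) hm) ξ).trans ?_
  rw [← NL_congr hA, ← congrFun (NL_const hp A (ENNReal.mul_ne_top hC2 hC1) _) ξ]
  exact NL_mono' hp A inner ξ
end Step


section Avg
variable {ι : Type} [DecidableEq ι] [Fintype ι]

theorem avg_map (c : ι) : Measure.map (fun z : (ι → ℝ) × ℝ => Function.update z.1 c z.2)
    ((Measure.pi (fun _ : ι => μI)).prod μI) = Measure.pi (fun _ : ι => μI) := by
  symm
  have hm : Measurable (fun z : (ι → ℝ) × ℝ => Function.update z.1 c z.2) :=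
    meas_update c measurable_fst measurable_snd
  refine Measure.pi_eq (fun s hs => ?_)
  rw [Measure.map_apply hm (MeasurableSet.univ_pi hs)]
  have : (fun z : (ι → ℝ) × ℝ => Function.update z.1 c z.2) ⁻¹' Set.univ.pi s =
      (Set.univ.pi (Function.update s c Set.univ)) ×ˢ (s c) := by
    ext ⟨t, x⟩
    simp only [Set.mem_preimage, Set.mem_pi, Set.mem_univ, true_imp_iff, Set.mem_prod]
    constructor
    · intro h
      refine ⟨fun i => ?_, by simpa using h c⟩
      by_cases hi : i = c
      · subst hi; simp
      · simpa [hi] using h i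
    · rintro ⟨h1, h2⟩ i
      by_cases hi : i = c
      · subst hi; simpa using h2
      · simpa [hi] using h1 i
  rw [this, Measure.prod_prod, Measure.pi_pi, ← Finset.mul_prod_erase Finset.univ _ (Finset.mem_univ c),
    ← Finset.mul_prod_erase Finset.univ (fun i => μI (s i)) (Finset.mem_univ c)]
  simp only [Function.update_self, measure_univ, one_mul]
  rw [mul_comm]
  congr 1
  refine Finset.prod_congr rfl (fun i hi => ?_)
  rw [Function.update_of_ne (Finset.ne_of_mem_erase hi)]

theorem avg (c : ι) {h : (ι → ℝ) → ℂ} (hh : BM h) :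
    ∫ t, h t ∂(Measure.pi (fun _ : ι => μI)) =
      ∫ t, (∫ s, h (Function.update t c s) ∂μI) ∂(Measure.pi (fun _ : ι => μI)) := by
  have hm : Measurable (fun z : (ι → ℝ) × ℝ => Function.update z.1 c z.2) :=
    meas_update c measurable_fst measurable_snd
  conv_lhs => rw [← avg_map c]
  rw [integral_map hm.aemeasurable hh.1.aestronglyMeasurable, integral_prod]
  exact (hh.comp hm).integrable _
end Avg


structure Dat (ι κ : Type) where
  kd : ι → ℕ
  par : ι → ι
  X : ι → κ
  Y : ι → κ
  ord : List ι

namespace Dat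
variable {ι κ : Type} [DecidableEq ι] [Fintype ι] [DecidableEq κ] [Fintype κ] (D : Dat ι κ)

noncomputable def ph (i : ι) (z : κ → ℝ) (t : ι → ℝ) : ℝ :=
  if D.kd i = 1 then z (D.X i) * t i
  else if D.kd i = 0 then z (D.X i) * t i + z (D.Y i) * t i ^ 2
  else z (D.X i) * t i + z (D.Y i) * t (D.par i) * t i

def S (T : Finset ι) : Finset κ :=
  T.biUnion (fun i => if D.kd i = 1 then {D.X i} else {D.X i, D.Y i})

noncomputable def E (T : Finset ι) (z : κ → ℝ) (g : (ι → ℝ) → ℂ) (ξ : ι → ℝ) : ℂ :=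
  ∫ t, ee (∑ i ∈ T, D.ph i z t) * g (T.piecewise t ξ) ∂(Measure.pi (fun _ : ι => μI))

noncomputable def F (c : ι) (z : κ → ℝ) (g : (ι → ℝ) → ℂ) (ξ : ι → ℝ) : ℂ :=
  ∫ s, ee (D.ph c z (Function.update ξ c s)) * g (Function.update ξ c s) ∂μI

theorem ph_meas (i : ι) : Measurable (Function.uncurry (D.ph i)) := by
  have : Function.uncurry (D.ph i) = fun w : (κ → ℝ) × (ι → ℝ) => D.ph i w.1 w.2 := rfl
  rw [this]
  unfold ph
  split_ifs <;> fun_prop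

theorem piecewise_meas (T : Finset ι) (ξ : ι → ℝ) :
    Measurable (fun t : ι → ℝ => T.piecewise t ξ) := by
  refine measurable_pi_lambda _ (fun i => ?_)
  by_cases h : i ∈ T
  · simp only [Finset.piecewise, h, if_true]; fun_prop
  · simp only [Finset.piecewise, h, if_false]; fun_prop

theorem integrand_BM (T : Finset ι) {g : (ι → ℝ) → ℂ} (hg : BM g) (ξ : ι → ℝ) :
    BM (Function.uncurry fun (z : κ → ℝ) (t : ι → ℝ) =>
      ee (∑ i ∈ T, D.ph i z t) * g (T.piecewise t ξ)) := by
  refine BM.mul (BM_ee (u := fun w : (κ → ℝ) × (ι → ℝ) => ∑ i ∈ T, D.ph i w.1 w.2) ?_)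
    (hg.comp ((piecewise_meas T ξ).comp measurable_snd))
  exact Finset.measurable_sum _ (fun i _ => D.ph_meas i)

theorem E_BM (T : Finset ι) {g : (ι → ℝ) → ℂ} (hg : BM g) (ξ : ι → ℝ) :
    BM (fun z => D.E T z g ξ) :=
  BM.integral_right (D.integrand_BM T hg ξ) _

theorem F_BM (c : ι) {g : (ι → ℝ) → ℂ} (hg : BM g) (z : κ → ℝ) :
    BM (D.F c z g) := by
  refine BM.integral_right (g := fun ξ s => ee (D.ph c z (Function.update ξ c s)) *
    g (Function.update ξ c s)) ?_ _
  have hm : Measurable (fun z : (ι → ℝ) × ℝ => Function.update z.1 c z.2) :=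
    meas_update c measurable_fst measurable_snd
  refine BM.mul (BM_ee ?_) (hg.comp hm)
  exact (D.ph_meas c).comp (measurable_const.prodMk hm)

theorem E_insert {c : ι} {T : Finset ι} (hc : c ∉ T) (h1 : ∀ i ∈ T, 2 ≤ D.kd i → D.par i ≠ c)
    (h2 : 2 ≤ D.kd c → D.par c ∈ T) {g : (ι → ℝ) → ℂ} (hg : BM g) (ξ : ι → ℝ) (z : κ → ℝ) :
    D.E (insert c T) z g ξ = D.E T z (D.F c z g) ξ := by
  have hb : BM (fun t => ee (∑ i ∈ insert c T, D.ph i z t) * g ((insert c T).piecewise t ξ)) :=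
    (D.integrand_BM (insert c T) hg ξ).comp (u := fun t => (z, t)) (by fun_prop)
  rw [E, avg c hb, E]
  congr 1; ext t
  rw [F, ← integral_const_mul]
  congr 1; ext s
  rw [Finset.sum_insert hc, add_comm, ee_add, mul_assoc]
  have e1 : ∑ i ∈ T, D.ph i z (Function.update t c s) = ∑ i ∈ T, D.ph i z t := by
    refine Finset.sum_congr rfl (fun i hi => ?_)
    have hic : i ≠ c := fun h => hc (h ▸ hi)
    have := h1 i hi
    unfold ph
    split_ifs with ha hb
    · rw [Function.update_of_ne hic]
    · rw [Function.update_of_ne hic]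
    · rw [Function.update_of_ne hic, Function.update_of_ne (this (by omega))]
  have e2 : (insert c T).piecewise (Function.update t c s) ξ =
      Function.update (T.piecewise t ξ) c s := by
    ext i
    by_cases hi : i = c
    · subst hi; simp
    · by_cases hT : i ∈ T <;> simp [Finset.piecewise, hi, hT]
  have e3 : D.ph c z (Function.update t c s) =
      D.ph c z (Function.update (T.piecewise t ξ) c s) := by
    unfold ph
    split_ifs with ha hb
    · simp
    · simp
    · have hT := h2 (by omega)
      have : D.par c ≠ c := fun h => hc (h ▸ hT)
      simp [this, hT]
  rw [e1, e2, e3]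

theorem F_congr (c : ι) {z z' : κ → ℝ} (hX : z (D.X c) = z' (D.X c))
    (hY : D.kd c ≠ 1 → z (D.Y c) = z' (D.Y c)) (g : (ι → ℝ) → ℂ) : D.F c z g = D.F c z' g := by
  ext ξ
  unfold F ph
  split_ifs with h
  · rw [hX]
  · rw [hX, hY h]
  · rw [hX, hY h]

def Cl (q : ℝ) (T : Finset ι) (p : ι → ℝ) : Prop :=
  ∃ C : ℝ≥0∞, C ≠ ∞ ∧ ∀ g : (ι → ℝ) → ℂ, BM g → ∀ (ξ : ι → ℝ) (z : κ → ℝ),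
    ((∫⋯∫⁻_(D.S T), (fun z => ‖D.E T z g ξ‖ₑ ^ q) ∂(fun _ : κ => (volume : Measure ℝ))) z) ^ (1 / q)
      ≤ C * NL p D.ord (fun ξ => ‖g ξ‖ₑ) ξ

theorem gen_step {q : ℝ} (hq : 0 < q) {T : Finset ι} {p p' : ι → ℝ} {c : ι} (hCl : D.Cl q T p)
    (hc : c ∉ T) (h1 : ∀ i ∈ T, 2 ≤ D.kd i → D.par i ≠ c)
    (h2 : 2 ≤ D.kd c → D.par c ∈ T) (hXS : D.X c ∉ D.S T) (hYS : D.kd c ≠ 1 → D.Y c ∉ D.S T)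
    {α : Type} [MeasurableSpace α] (μ : Measure α) (U : α → (κ → ℝ) → (κ → ℝ))
    (φ : α → (ι → ℝ) → ℝ → ℝ)
    (hφ : ∀ a z ξ s, D.ph c (U a z) (Function.update ξ c s) = φ a ξ s)
    (hU : ∀ f : (κ → ℝ) → ℝ≥0∞, Measurable f → ∀ z,
      (∫⋯∫⁻_(D.S (insert c T)), f ∂(fun _ : κ => (volume : Measure ℝ))) z =
        ∫⁻ a, (∫⋯∫⁻_(D.S T), f ∂(fun _ : κ => (volume : Measure ℝ))) (U a z) ∂μ)
    (H : ∃ C : ℝ≥0∞, C ≠ ∞ ∧ ∀ g : (ι → ℝ) → ℂ, BM g → ∀ ξ,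
      (∫⁻ a, NL p D.ord (fun ξ => ‖∫ s, ee (φ a ξ s) * g (Function.update ξ c s) ∂μI‖ₑ) ξ ^ q ∂μ)
        ^ (1 / q) ≤ C * NL p' D.ord (fun ξ => ‖g ξ‖ₑ) ξ) :
    D.Cl q (insert c T) p' := by
  obtain ⟨C, hC, hCl⟩ := hCl
  obtain ⟨C', hC', H⟩ := H
  refine ⟨C * C', ENNReal.mul_ne_top hC hC', fun g hg ξ z0 => ?_⟩
  rw [hU _ ((D.E_BM _ hg ξ).1.enorm.pow_const q)]
  have key : ∀ a, (∫⋯∫⁻_(D.S T), (fun z => ‖D.E (insert c T) z g ξ‖ₑ ^ q)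
      ∂(fun _ : κ => (volume : Measure ℝ))) (U a z0) ≤
      (C * NL p D.ord (fun ξ => ‖∫ s, ee (φ a ξ s) * g (Function.update ξ c s) ∂μI‖ₑ) ξ) ^ q := by
    intro a
    have e : (∫⋯∫⁻_(D.S T), (fun z => ‖D.E (insert c T) z g ξ‖ₑ ^ q)
      ∂(fun _ : κ => (volume : Measure ℝ))) (U a z0) =
      (∫⋯∫⁻_(D.S T), (fun z => ‖D.E T z (D.F c (U a z0) g) ξ‖ₑ ^ q)
      ∂(fun _ : κ => (volume : Measure ℝ))) (U a z0) := by
      unfold lmarginal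
      congr 1; ext y; dsimp only
      rw [D.E_insert hc h1 h2 hg ξ]
      congr 3
      refine D.F_congr c ?_ (fun h => ?_) g
      · simp [Function.updateFinset, hXS]
      · simp [Function.updateFinset, hYS h]
    rw [e]
    have := hCl (D.F c (U a z0) g) (D.F_BM c hg _) ξ (U a z0)
    rw [one_div, ENNReal.rpow_inv_le_iff hq] at this
    refine this.trans (le_of_eq ?_)
    congr 3
    ext ξ'
    unfold F
    simp_rw [hφ]
  calc _ ≤ (∫⁻ a, (C * NL p D.ord (fun ξ =>
        ‖∫ s, ee (φ a ξ s) * g (Function.update ξ c s) ∂μI‖ₑ) ξ) ^ q ∂μ) ^ (1 / q) :=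
        ENNReal.rpow_le_rpow (lintegral_mono key) (by positivity)
    _ = C * (∫⁻ a, (NL p D.ord (fun ξ =>
        ‖∫ s, ee (φ a ξ s) * g (Function.update ξ c s) ∂μI‖ₑ) ξ) ^ q ∂μ) ^ (1 / q) := by
        simp_rw [ENNReal.mul_rpow_of_nonneg _ _ hq.le]
        rw [lintegral_const_mul' _ _ (ENNReal.rpow_ne_top_of_nonneg hq.le hC),
          ENNReal.mul_rpow_of_nonneg _ _ (by positivity), ← ENNReal.rpow_mul,
          mul_one_div_cancel hq.ne', ENNReal.rpow_one]
    _ ≤ _ := by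
        rw [mul_assoc]
        exact mul_le_mul' le_rfl (H g hg ξ)
end Dat


theorem lmarg2 {κ : Type} [DecidableEq κ] [Fintype κ] {S : Finset κ} {X Y : κ} (hXY : X ≠ Y)
    (hX : X ∉ S) (hY : Y ∉ S) (f : (κ → ℝ) → ℝ≥0∞) (hf : Measurable f) (z : κ → ℝ) :
    (∫⋯∫⁻_({X, Y} ∪ S), f ∂(fun _ : κ => (volume : Measure ℝ))) z =
      ∫⁻ a : ℝ × ℝ, (∫⋯∫⁻_S, f ∂(fun _ : κ => (volume : Measure ℝ)))
        (Function.update (Function.update z Y a.1) X a.2) := by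
  have e : ({X, Y} ∪ S : Finset κ) = insert Y (insert X S) := by
    ext i; simp; tauto
  rw [e, lmarginal_insert _ hf (by simp [hXY.symm, hY])]
  have hm : Measurable (fun a : ℝ × ℝ => (∫⋯∫⁻_S, f ∂(fun _ : κ => (volume : Measure ℝ)))
        (Function.update (Function.update z Y a.1) X a.2)) :=
    (hf.lmarginal _).comp (meas_update X (meas_update Y measurable_const measurable_fst)
      measurable_snd)
  rw [Measure.volume_eq_prod, lintegral_prod _ hm.aemeasurable]
  congr 1; ext y
  rw [lmarginal_insert _ hf hX]

namespace Dat
variable {ι κ : Type} [DecidableEq ι] [Fintype ι] [DecidableEq κ] [Fintype κ] (D : Dat ι κ)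

structure Good (pos key : ι → ℕ) : Prop where
  hX : Function.Injective D.X
  hXY : ∀ i j, D.kd j ≠ 1 → D.X i ≠ D.Y j
  hY : ∀ i j, D.kd i ≠ 1 → D.kd j ≠ 1 → D.Y i = D.Y j → i = j
  nodup : D.ord.Nodup
  mem : ∀ i, i ∈ D.ord
  sorted : D.ord.Pairwise (fun i j => pos i < pos j)
  pos_kd : ∀ i j, pos i < pos j → D.kd i ≤ D.kd j
  key_inj : Function.Injective key
  key_root : ∀ i j, D.kd i < 2 → D.kd j < 2 → pos i < pos j → key i < key j
  key_rc : ∀ i j, D.kd i < 2 → 2 ≤ D.kd j → key i < key j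
  key_cc : ∀ i j, 2 ≤ D.kd i → 2 ≤ D.kd j → pos (D.par i) < pos (D.par j) → key i < key j
  par_pos : ∀ c, 2 ≤ D.kd c → pos (D.par c) < pos c

def m (T : Finset ι) (i : ι) : ℕ :=
  (T.filter (fun c => 2 ≤ D.kd c ∧ D.par c = i)).card + if D.kd i = 0 then 1 else 0

noncomputable def e (q δ : ℝ) (T : Finset ι) (i : ι) : ℝ :=
  1 - (D.m T i + if D.kd i = 1 then 1 else 2) / q - D.m T i * δ

noncomputable def pe (q δ : ℝ) (T : Finset ι) (i : ι) : ℝ :=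
  if i ∈ T then 1 / D.e q δ T i else 0

theorem m_insert {T : Finset ι} {c : ι} (hc : c ∉ T) (i : ι) :
    D.m (insert c T) i = D.m T i + if 2 ≤ D.kd c ∧ D.par c = i then 1 else 0 := by
  unfold m
  rw [Finset.filter_insert]
  by_cases h : 2 ≤ D.kd c ∧ D.par c = i
  · rw [if_pos h, if_pos h, Finset.card_insert_of_notMem (by simp [hc])]; omega
  · rw [if_neg h, if_neg h, add_zero]

theorem m_none {T : Finset ι} {i : ι} (h : ∀ c ∈ T, 2 ≤ D.kd c → D.par c ≠ i) :
    D.m T i = if D.kd i = 0 then 1 else 0 := by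
  unfold m
  rw [Finset.filter_eq_empty_iff.2]
  · simp
  · rintro c hc ⟨h1, h2⟩; exact h c hc h1 h2

variable {D} {pos key : ι → ℕ}

theorem Good.key_par (hD : D.Good pos key) {c : ι} (hc : 2 ≤ D.kd c) : key (D.par c) < key c := by
  by_cases h : D.kd (D.par c) < 2
  · exact hD.key_rc _ _ h hc
  · exact hD.key_cc _ _ (by omega) hc (hD.par_pos _ (by omega))

theorem step {q δ : ℝ} (hq : 4 < q) (hδ : 0 < δ) (hD : D.Good pos key)
    (hE : ∀ T i, 1 / q ≤ D.e q δ T i) {T : Finset ι} {c : ι} (hT : ∀ i, i ∈ T ↔ key i < key c)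
    (hCl : D.Cl q T (D.pe q δ T)) : D.Cl q (insert c T) (D.pe q δ (insert c T)) := by
  have hq0 : 0 < q := by linarith
  have hE0 : ∀ T i, 0 < D.e q δ T i := fun T i => lt_of_lt_of_le (by positivity) (hE T i)
  have hcT : c ∉ T := by rw [hT]; exact lt_irrefl _
  have h1 : ∀ i ∈ T, 2 ≤ D.kd i → D.par i ≠ c := by
    intro i hi h2 h3
    have h4 := hD.key_par h2
    rw [h3] at h4
    have := (hT i).1 hi
    omega
  have h2 : 2 ≤ D.kd c → D.par c ∈ T := fun h => (hT _).2 (hD.key_par h)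
  have hXS : D.X c ∉ D.S T := by
    intro h
    simp only [S, Finset.mem_biUnion] at h
    obtain ⟨i, hi, h⟩ := h
    have hic : i ≠ c := fun h => hcT (h ▸ hi)
    split_ifs at h with hk
    · rw [Finset.mem_singleton] at h; exact hic (hD.hX h).symm
    · rw [Finset.mem_insert, Finset.mem_singleton] at h
      rcases h with h | h
      · exact hic (hD.hX h).symm
      · exact hD.hXY _ _ hk h
  have hYS : D.kd c ≠ 1 → D.Y c ∉ D.S T := by
    intro hkc h
    simp only [S, Finset.mem_biUnion] at h
    obtain ⟨i, hi, h⟩ := h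
    have hic : i ≠ c := fun h => hcT (h ▸ hi)
    split_ifs at h with hk
    · rw [Finset.mem_singleton] at h; exact hD.hXY _ _ hkc h.symm
    · rw [Finset.mem_insert, Finset.mem_singleton] at h
      rcases h with h | h
      · exact hD.hXY _ _ hkc h.symm
      · exact hic (hD.hY _ _ hk hkc h.symm)
  have hp0 : ∀ i, 0 ≤ D.pe q δ T i := by
    intro i; unfold pe; split_ifs
    · have := hE0 T i; positivity
    · exact le_rfl
  have hpq : ∀ i, D.pe q δ T i ≤ q := by
    intro i; unfold pe; split_ifs
    · exact (one_div_le (hE0 T i) hq0).2 (hE T i)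
    · exact hq0.le
  have hpc : D.pe q δ T c = 0 := by simp [pe, hcT]
  have hmc : D.m (insert c T) c = if D.kd c = 0 then 1 else 0 := by
    refine D.m_none ?_
    intro i hi hk
    rcases Finset.mem_insert.1 hi with h | h
    · subst h; intro h; have := hD.par_pos _ hk; rw [h] at this; omega
    · exact h1 i h hk
  have hpc' : D.pe q δ (insert c T) c = 1 / D.e q δ (insert c T) c := by simp [pe]
  have hpeq : ∀ i, i ≠ c → ¬ (2 ≤ D.kd c ∧ D.par c = i) →
      D.pe q δ T i = D.pe q δ (insert c T) i := by
    intro i hi h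
    simp only [pe, Finset.mem_insert, hi, false_or, e, D.m_insert hcT, h, if_false, add_zero]
  have hSins : D.S (insert c T) = (if D.kd c = 1 then {D.X c} else {D.X c, D.Y c}) ∪ D.S T := by
    unfold S; rw [Finset.biUnion_insert]
  obtain ⟨A, B, hAB⟩ := List.append_of_mem (hD.mem c)
  have hsort := hD.sorted
  have hnd := hD.nodup
  rw [hAB] at hsort hnd
  have hBpos : ∀ i ∈ B, pos c < pos i :=
    (List.pairwise_cons.1 (List.pairwise_append.1 hsort).2.1).1
  have hAc : ∀ i ∈ A, pos i < pos c := fun i hi =>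
    (List.pairwise_append.1 hsort).2.2 i hi c (by simp)
  by_cases hroot : D.kd c < 2
  · have hBT : ∀ i ∈ B, i ∉ T ∧ i ≠ c := by
      intro i hi
      have h3 := hBpos i hi
      have hic : i ≠ c := by rintro rfl; omega
      refine ⟨fun h4 => ?_, hic⟩
      have h5 := (hT i).1 h4
      by_cases hk : D.kd i < 2
      · have := hD.key_root _ _ hroot hk h3; omega
      · have := hD.key_rc c i hroot (by omega); omega
    have hB1 : ∀ i ∈ B, D.pe q δ T i = 0 := fun i hi => by simp [pe, (hBT i hi).1]
    have hB2 : ∀ i ∈ B, D.pe q δ (insert c T) i = 0 := fun i hi => by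
      simp [pe, (hBT i hi).1, (hBT i hi).2]
    have hA : ∀ i ∈ A, D.pe q δ T i = D.pe q δ (insert c T) i := fun i hi =>
      hpeq i (by rintro rfl; have := hAc _ hi; omega) (by omega)
    have hpc0 : 0 < D.pe q δ (insert c T) c := by
      rw [hpc']; exact one_div_pos.2 (hE0 _ _)
    by_cases hlin : D.kd c = 1
    · refine D.gen_step hq0 hCl hcT h1 h2 hXS hYS (volume : Measure ℝ)
        (fun x z => Function.update z (D.X c) x) (fun x _ s => x * s) ?_ ?_ ?_
      · intro a z ξ s; simp [ph, hlin]
      · intro f hf z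
        rw [hSins, if_pos hlin, ← Finset.insert_eq, lmarginal_insert _ hf hXS]
      · have hee : D.e q δ (insert c T) c = 1 - 1 / q := by simp [e, hmc, hlin]
        obtain ⟨C, hC, H⟩ := HY (b := q) (p := D.pe q δ (insert c T) c) (by linarith) (by
          rw [hpc', one_div_one_div, hee]; ring)
        refine ⟨C, hC, fun g hg ξ => ?_⟩
        rw [hAB]
        exact step_root volume hp0 (fun i _ => hpq i) hpc hB1 hB2 hA hpc0
          (fun x s => x * s) (by fun_prop) hC H hg ξ
    · have hsq : D.kd c = 0 := by omega
      refine D.gen_step hq0 hCl hcT h1 h2 hXS hYS (volume : Measure (ℝ × ℝ))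
        (fun a z => Function.update (Function.update z (D.Y c) a.1) (D.X c) a.2)
        (fun a _ s => a.2 * s + a.1 * s ^ 2) ?_ ?_ ?_
      · intro a z ξ s; simp [ph, hsq, (hD.hXY c c hlin).symm]
      · intro f hf z
        rw [hSins, if_neg hlin, lmarg2 (hD.hXY c c hlin) hXS (hYS hlin) f hf]
      · have hee : D.e q δ (insert c T) c = 1 - 3 / q - δ := by simp [e, hmc, hsq]; norm_num
        obtain ⟨C, hC, H⟩ := parab (q := q) (p := D.pe q δ (insert c T) c) hq hpc0 (by
          rw [hpc', one_div_one_div, hee]; linarith)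
        refine ⟨C, hC, fun g hg ξ => ?_⟩
        rw [hAB]
        refine step_root volume hp0 (fun i _ => hpq i) hpc hB1 hB2 hA hpc0
          (fun (a : ℝ × ℝ) s => a.2 * s + a.1 * s ^ 2) (by fun_prop) hC (fun g hg => ?_) hg ξ
        rw [Measure.volume_eq_prod, lintegral_prod]
        · exact H g hg
        · refine Measurable.aemeasurable ?_
          refine Measurable.pow_const (Measurable.enorm ?_) q
          refine (BM.integral_right (g := fun (a : ℝ × ℝ) s => ee (a.2 * s + a.1 * s ^ 2) * g s)
            ?_ μI).1
          exact BM.mul (BM_ee (by fun_prop)) (hg.comp measurable_snd)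
  · have hch : 2 ≤ D.kd c := by omega
    have hlin : D.kd c ≠ 1 := by omega
    obtain ⟨l, hl⟩ : ∃ l, l = D.par c := ⟨_, rfl⟩
    have hlT : l ∈ T := hl ▸ h2 hch
    have hlc : l ≠ c := fun h => hcT (h ▸ hlT)
    have hlpos : pos l < pos c := hl ▸ hD.par_pos c hch
    have hlA : l ∈ A := by
      have := hD.mem l
      rw [hAB, List.mem_append, List.mem_cons] at this
      rcases this with h | h | h
      · exact h
      · exact absurd h hlc
      · have := hBpos l h; omega
    obtain ⟨A1, A2, hA⟩ := List.append_of_mem hlA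
    have hord : D.ord = A1 ++ l :: (A2 ++ c :: B) := by rw [hAB, hA]; simp
    have hsort2 := hD.sorted
    have hnd2 := hD.nodup
    rw [hord] at hsort2 hnd2
    have hafter : ∀ i ∈ A2 ++ c :: B, pos l < pos i :=
      (List.pairwise_cons.1 (List.pairwise_append.1 hsort2).2.1).1
    have hbefore : ∀ i ∈ A1, pos i < pos l := fun i hi =>
      (List.pairwise_append.1 hsort2).2.2 i hi l (by simp)
    -- multiplicities of nodes after `l`
    have hmaft : ∀ i, pos l < pos i → D.m T i = if D.kd i = 0 then 1 else 0 := by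
      intro i hi
      refine D.m_none (fun c' hc' hk hp => ?_)
      have := (hT c').1 hc'
      have h5 := hD.key_cc c c' hch hk (by rw [hp, ← hl]; exact hi)
      omega
    have hel : D.e q δ (insert c T) l = D.e q δ T l - 1 / q - δ := by
      have : D.m (insert c T) l = D.m T l + 1 := by rw [D.m_insert hcT]; simp [hch, hl]
      simp only [e, this]; push_cast; ring
    have hec : D.e q δ (insert c T) c = 1 - 2 / q := by
      have : D.kd c ≠ 0 := by omega
      simp [e, hmc, hlin, this]
    have hel2 := hE (insert c T) l
    have hpl : D.pe q δ T l = 1 / D.e q δ T l := by simp [pe, hlT]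
    have hpl' : D.pe q δ (insert c T) l = 1 / D.e q δ (insert c T) l := by simp [pe, hlT]
    have h2q : 2 / q < D.e q δ T l := by
      rw [hel] at hel2; have : 2 / q = 1 / q + 1 / q := by ring
      linarith
    have hs₀ : 0 < D.pe q δ (insert c T) c := by rw [hpc']; exact one_div_pos.2 (hE0 _ _)
    have h4q : 2 / q ≤ 1 - 2 / q := by
      have : 4 / q ≤ 1 := by rw [div_le_one hq0]; exact hq.le
      have : 4 / q = 2 / q + 2 / q := by ring
      linarith
    refine D.gen_step hq0 hCl hcT h1 h2 hXS hYS (volume : Measure (ℝ × ℝ))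
        (fun a z => Function.update (Function.update z (D.Y c) a.1) (D.X c) a.2)
        (fun a ξ s => a.2 * s + a.1 * ξ l * s) ?_ ?_ ?_
    · intro a z ξ s
      have : D.kd c ≠ 0 := by omega
      simp [ph, this, hlin, (hD.hXY c c hlin).symm, ← hl, hlc]
    · intro f hf z
      rw [hSins, if_neg hlin, lmarg2 (hD.hXY c c hlin) hXS (hYS hlin) f hf]
    · obtain ⟨C, hC, H⟩ := step_child (ι := ι) (q := q) hq (pl := D.pe q δ T l)
        (pl' := D.pe q δ (insert c T) l) (s₀ := D.pe q δ (insert c T) c)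
        (by rw [hpl]; exact one_div_pos.2 (hE0 _ _)) (by rw [hpl']; exact one_div_pos.2 (hE0 _ _))
        (by rw [hpl, mul_one_div, div_lt_iff₀ (hE0 _ _)]; rw [div_lt_iff₀ hq0] at h2q; linarith)
        (by rw [hpl, hpl', one_div_one_div, one_div_one_div, hel]; linarith)
        (by rw [hpc', one_div_one_div, hec, one_div_div]; ring) hs₀
      refine ⟨C, hC, ?_⟩
      rw [hord]
      refine H (D.pe q δ T) (D.pe q δ (insert c T)) A1 A2 B l c hp0 rfl rfl hpc rfl ?_ ?_ ?_
        (fun i _ => hpq i) ?_ ?_ hnd2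
      · intro i hi
        have := hbefore i hi
        exact hpeq i (by rintro rfl; omega) (by rintro ⟨_, h⟩; rw [← h, ← hl] at this; omega)
      · intro i hi
        have h3 := hafter i (by simp [hi])
        have h4 := hAc i (by rw [hA]; simp [hi])
        exact hpeq i (by rintro rfl; omega) (by rintro ⟨_, h⟩; rw [← h, ← hl] at h3; omega)
      · intro i hi
        have h3 := hafter i (by simp [hi])
        have h4 := hBpos i hi
        exact hpeq i (by rintro rfl; omega) (by rintro ⟨_, h⟩; rw [← h, ← hl] at h3; omega)
      · intro i hi
        have h3 := hafter i hi
        by_cases hiT : i ∈ T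
        · rw [pe, if_pos hiT, show q / 2 = 1 / (2 / q) by rw [one_div_div]]
          refine one_div_le_one_div_of_le (by positivity) ?_
          rw [e, hmaft i h3]
          by_cases hk0 : D.kd i = 0
          · -- then l is a square as well
            have hkl : D.kd l = 0 := by have := hD.pos_kd _ _ h3; omega
            have hml : 2 ≤ D.m (insert c T) l := by
              rw [D.m_insert hcT]; simp only [m, hkl, hch, ← hl]; simp
            have hml' : (2 : ℝ) ≤ D.m (insert c T) l := by exact_mod_cast hml
            rw [e, hkl] at hel2
            simp only [hk0]
            norm_num
            norm_num at hel2
            have a1 : (4 : ℝ) / q ≤ (D.m (insert c T) l + 2) / q := by gcongr; linarith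
            have a2 : 2 * δ ≤ (D.m (insert c T) l) * δ := by gcongr
            have a3 : (4 : ℝ) / q = 4 * q⁻¹ := by ring
            have a4 : (2 : ℝ) / q = 2 * q⁻¹ := by ring
            have a5 : (3 : ℝ) / q = 3 * q⁻¹ := by ring
            linarith
          · have a3 : (if D.kd i = 1 then (1 : ℝ) else 2) / q ≤ 2 / q := by
              gcongr; split_ifs <;> norm_num
            simp only [hk0, if_false, Nat.cast_zero, zero_add, zero_mul, sub_zero]
            linarith
        · rw [pe, if_neg hiT]; positivity
      · intro i hi
        have h3 := hafter i (by simp [hi])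
        have h4 := hD.pos_kd _ _ (hBpos i hi)
        by_cases hiT : i ∈ T
        · right
          have hk0 : D.kd i ≠ 0 := by omega
          have hk1 : D.kd i ≠ 1 := by omega
          rw [hpc', hec, pe, if_pos hiT, e, hmaft i h3]
          simp [hk0, hk1]
        · left; rw [pe, if_neg hiT]

theorem Cl_all {q δ : ℝ} (hq : 4 < q) (hδ : 0 < δ) (hD : D.Good pos key)
    (hE : ∀ T i, 1 / q ≤ D.e q δ T i) :
    D.Cl q Finset.univ (D.pe q δ Finset.univ) := by
  have hq0 : 0 < q := by linarith
  have claim : ∀ t : ℕ, D.Cl q (Finset.univ.filter (fun i => key i < t))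
      (D.pe q δ (Finset.univ.filter (fun i => key i < t))) := by
    intro t
    induction t with
    | zero =>
      simp only [not_lt_zero, Finset.filter_false]
      refine ⟨1, ENNReal.one_ne_top, fun g hg ξ z => ?_⟩
      rw [NL_absent (fun i _ => by simp [pe])]
      simp only [S, Finset.biUnion_empty, lmarginal_empty, E, Finset.sum_empty, ee_zero, one_mul,
        Finset.piecewise_empty]
      rw [← ENNReal.rpow_mul, mul_one_div_cancel hq0.ne', ENNReal.rpow_one]
      simp
    | succ t ih =>
      by_cases h : ∃ c, key c = t
      · obtain ⟨c, hc⟩ := h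
        have e1 : Finset.univ.filter (fun i => key i < t + 1) =
            insert c (Finset.univ.filter (fun i => key i < t)) := by
          ext i
          simp only [Finset.mem_filter, Finset.mem_univ, true_and, Finset.mem_insert]
          constructor
          · intro h
            by_cases hi : key i = t
            · left; exact hD.key_inj (hi.trans hc.symm)
            · right; omega
          · rintro (h | h)
            · rw [h]; omega
            · omega
        rw [e1]
        exact step hq hδ hD hE (by intro i; simp [hc]) ih
      · have e1 : Finset.univ.filter (fun i => key i < t + 1) =
            Finset.univ.filter (fun i => key i < t) := by
          ext i
          simp only [Finset.mem_filter, Finset.mem_univ, true_and]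
          have : key i ≠ t := fun h' => h ⟨i, h'⟩
          omega
        rw [e1]; exact ih
  have := claim (Finset.univ.sup key + 1)
  have e1 : Finset.univ.filter (fun i => key i < Finset.univ.sup key + 1) = Finset.univ := by
    ext i
    have := Finset.le_sup (f := key) (Finset.mem_univ i)
    simp; omega
  rwa [e1] at this
end Dat


section Concrete
variable {n k : ℕ} (η : ℕ) (lam : Fin n → Fin (n + k))

/-- index of the quadratic form attached to a nonlinear coordinate -/
def jj (hηn : η < n) (i : Fin (n + k)) : Fin n :=
  ⟨if (i : ℕ) < η then i else i - k, by have := i.isLt; split_ifs <;> omega⟩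

def kdC (hηn : η < n) (i : Fin (n + k)) : ℕ :=
  if (i : ℕ) < η then 0 else if (i : ℕ) < η + k then 1 else if lam (jj η hηn i) = i then 0 else 2

def ordC (hηn : η < n) : List (Fin (n + k)) :=
  (List.finRange (n + k)).filter (fun i => kdC η lam hηn i = 0) ++
  ((List.finRange (n + k)).filter (fun i => kdC η lam hηn i = 1) ++
  (List.finRange (n + k)).filter (fun i => kdC η lam hηn i = 2))

def DC (hηn : η < n) : Dat (Fin (n + k)) (Fin ((n + k) + n)) where
  kd := kdC η lam hηn
  par i := lam (jj η hηn i)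
  X i := Fin.castAdd n i
  Y i := Fin.natAdd (n + k) (jj η hηn i)
  ord := ordC η lam hηn

def posC (hηn : η < n) (i : Fin (n + k)) : ℕ := kdC η lam hηn i * (n + k) + i

def keyC (hηn : η < n) (i : Fin (n + k)) : ℕ :=
  if kdC η lam hηn i < 2 then posC η lam hηn i
  else (3 + posC η lam hηn (lam (jj η hηn i))) * (n + k) + i

theorem kdC_le (hηn : η < n) (i : Fin (n + k)) : kdC η lam hηn i ≤ 2 := by
  unfold kdC; split_ifs <;> omega

theorem posC_kd (hηn : η < n) (i j : Fin (n + k)) (h : posC η lam hηn i < posC η lam hηn j) :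
    kdC η lam hηn i ≤ kdC η lam hηn j := by
  unfold posC at h
  by_contra hc
  have : (kdC η lam hηn j + 1) * (n + k) ≤ kdC η lam hηn i * (n + k) :=
    Nat.mul_le_mul_right _ (by omega)
  rw [Nat.add_mul] at this
  have := j.isLt
  omega

theorem posC_of_kd (hηn : η < n) (i j : Fin (n + k)) (h : kdC η lam hηn i < kdC η lam hηn j) :
    posC η lam hηn i < posC η lam hηn j := by
  unfold posC
  have : (kdC η lam hηn i + 1) * (n + k) ≤ kdC η lam hηn j * (n + k) :=
    Nat.mul_le_mul_right _ (by omega)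
  rw [Nat.add_mul] at this
  have := i.isLt
  omega

theorem posC_of_lt (hηn : η < n) (i j : Fin (n + k)) (h : kdC η lam hηn i ≤ kdC η lam hηn j) (hij : i < j) :
    posC η lam hηn i < posC η lam hηn j := by
  unfold posC
  have : (kdC η lam hηn i) * (n + k) ≤ kdC η lam hηn j * (n + k) :=
    Nat.mul_le_mul_right _ h
  have : (i : ℕ) < j := hij
  omega

theorem keyC_mod (hηn : η < n) (i : Fin (n + k)) : keyC η lam hηn i % (n + k) = i := by
  unfold keyC posC
  split_ifs
  · rw [Nat.mul_add_mod', Nat.mod_eq_of_lt i.isLt]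
  · rw [Nat.mul_add_mod', Nat.mod_eq_of_lt i.isLt]

theorem DC_good (hηn : η < n) (hlam : ∀ j : Fin n, η ≤ (j : ℕ) → (lam j : ℕ) ≤ (j : ℕ) + k) :
    (DC η lam hηn).Good (posC η lam hηn) (keyC η lam hηn) where
  hX := Fin.castAdd_injective _ _
  hXY i j _ h := by
    have := congrArg Fin.val h
    simp [DC] at this
    have := i.isLt
    omega
  hY i j hi hj h := by
    have h1 := congrArg Fin.val h
    simp only [DC, Fin.val_natAdd, jj] at h1
    simp only [DC, kdC] at hi hj
    ext
    split_ifs at h1 hi hj <;> omega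
  nodup := by
    have := List.nodup_finRange (n + k)
    simp only [DC, ordC]
    rw [List.nodup_append, List.nodup_append]
    refine ⟨this.filter _, ⟨this.filter _, this.filter _, ?_⟩, ?_⟩
    · intro a ha b hb
      simp at ha hb
      rintro rfl; omega
    · intro a ha b hb
      simp at ha hb
      rintro rfl; omega
  mem i := by
    have := kdC_le η lam hηn i
    simp only [DC, ordC, List.mem_append, List.mem_filter, List.mem_finRange, true_and,
      decide_eq_true_eq]
    omega
  sorted := by
    have h0 := List.pairwise_lt_finRange (n + k)
    have hf : ∀ a, ((List.finRange (n + k)).filter (fun i => kdC η lam hηn i = a)).Pairwise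
        (fun i j => posC η lam hηn i < posC η lam hηn j) := by
      intro a
      rw [List.pairwise_filter]
      refine h0.imp ?_
      intro i j hij hi hj
      simp at hi hj
      exact posC_of_lt _ _ _ _ _ (by omega) hij
    simp only [DC, ordC]
    rw [List.pairwise_append, List.pairwise_append]
    refine ⟨hf 0, ⟨hf 1, hf 2, ?_⟩, ?_⟩
    · intro a ha b hb
      simp at ha hb
      exact posC_of_kd _ _ _ _ _ (by omega)
    · intro a ha b hb
      simp at ha hb
      exact posC_of_kd _ _ _ _ _ (by omega)
  pos_kd := posC_kd η lam hηn
  key_inj i j h := by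
    ext; rw [← keyC_mod η lam hηn i, h, keyC_mod]
  key_root i j hi hj h := by
    simp only [DC] at hi hj
    simp only [keyC, hi, hj, if_true]; exact h
  key_rc i j hi hj := by
    simp only [DC] at hi hj
    have : ¬ kdC η lam hηn j < 2 := by omega
    simp only [keyC, hi, this, if_true, if_false]
    unfold posC
    have h1 : kdC η lam hηn i * (n + k) ≤ 1 * (n + k) := Nat.mul_le_mul_right _ (by omega)
    rw [Nat.add_mul]
    have := i.isLt
    omega
  key_cc i j hi hj h := by
    simp only [DC] at hi hj h
    have h1 : ¬ kdC η lam hηn j < 2 := by omega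
    have h2 : ¬ kdC η lam hηn i < 2 := by omega
    simp only [keyC, h1, h2, if_false]
    have h3 : (3 + posC η lam hηn (lam (jj η hηn i)) + 1) * (n + k) ≤
      (3 + posC η lam hηn (lam (jj η hηn j))) * (n + k) := Nat.mul_le_mul_right _ (by omega)
    rw [Nat.add_mul] at h3
    have := i.isLt
    omega
  par_pos c hc := by
    simp only [DC] at hc ⊢
    have hc2 := kdC_le η lam hηn c
    refine posC_of_lt _ _ _ _ _ ((kdC_le η lam hηn _).trans hc) ?_
    unfold kdC at hc
    split_ifs at hc with h1 h2 h3
    · omega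
    · omega
    · omega
    · have := hlam (jj η hηn c) (by simp only [jj, h1, if_false]; omega)
      have h4 : ((jj η hηn c : Fin n) : ℕ) + k = c := by simp only [jj, h1, if_false]; omega
      rw [h4] at this
      exact lt_of_le_of_ne this h3

/-- coordinate attached to a form -/
def ej (j : Fin n) : Fin (n + k) := ⟨if (j : ℕ) < η then j else j + k, by
  have := j.isLt; split_ifs <;> omega⟩

theorem ej_inj : Function.Injective (ej η : Fin n → Fin (n + k)) := by
  intro i j h
  have := congrArg Fin.val h
  simp only [ej] at this
  ext
  split_ifs at this <;> omega

theorem jj_ej (hηn : η < n) (j : Fin n) : jj η hηn (ej η j : Fin (n + k)) = j := by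
  ext
  simp only [jj, ej]
  split_ifs <;> omega

theorem kd_ej (hηn : η < n) (j : Fin n) : kdC η lam hηn (ej η j : Fin (n + k)) =
    if (j : ℕ) < η then 0 else if lam j = ej η j then 0 else 2 := by
  unfold kdC
  rw [jj_ej]
  by_cases h : (j : ℕ) < η
  · simp [ej, h]
  · have h1 : ¬ ((ej η j : Fin (n + k)) : ℕ) < η := by simp only [ej, h, if_false]; omega
    have h2 : ¬ ((ej η j : Fin (n + k)) : ℕ) < η + k := by simp only [ej, h, if_false]; omega
    rw [if_neg h1, if_neg h2, if_neg h]

theorem S_univ (hηn : η < n) : (DC η lam hηn).S Finset.univ = Finset.univ := by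
  ext x
  simp only [Finset.mem_univ, iff_true, Dat.S, Finset.mem_biUnion, true_and]
  refine Fin.addCases (fun i => ?_) (fun j => ?_) x
  · refine ⟨i, ?_⟩
    split_ifs <;> simp [DC]
  · refine ⟨ej η j, ?_⟩
    have hk : (DC η lam hηn).kd (ej η j) ≠ 1 := by
      change kdC η lam hηn (ej η j) ≠ 1
      rw [kd_ej]; split_ifs <;> omega
    rw [if_neg hk]
    simp [DC, jj_ej]

theorem phase_sum (hηn : η < n) (z : Fin ((n + k) + n) → ℝ) (t : Fin (n + k) → ℝ) :
    ∑ i, (DC η lam hηn).ph i z t = (∑ i : Fin (n + k), z (Fin.castAdd n i) * t i) +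
      ∑ j : Fin n, z (Fin.natAdd (n + k) j) *
        (if (j : ℕ) < η then t ⟨(j : ℕ), by have := j.isLt; omega⟩ ^ 2
            else t (lam j) * t ⟨(j : ℕ) + k, by have := j.isLt; omega⟩) := by
  have h : ∀ i, (DC η lam hηn).ph i z t = z (Fin.castAdd n i) * t i +
      (if kdC η lam hηn i = 1 then 0 else z (Fin.natAdd (n + k) (jj η hηn i)) *
        (if kdC η lam hηn i = 0 then t i ^ 2 else t (lam (jj η hηn i)) * t i)) := by
    intro i
    by_cases h1 : kdC η lam hηn i = 1
    · simp [Dat.ph, DC, h1]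
    · by_cases h0 : kdC η lam hηn i = 0
      · simp [Dat.ph, DC, h0]
      · simp [Dat.ph, DC, h0, h1, mul_assoc]
  simp_rw [h]
  rw [Finset.sum_add_distrib]
  congr 1
  symm
  refine Fintype.sum_of_injective (ej η) (ej_inj η) _ _ ?_ ?_
  · intro i hi
    rw [if_pos]
    unfold kdC
    by_cases h1 : (i : ℕ) < η
    · exact absurd ⟨⟨i, by omega⟩, by ext; simp [ej, h1]⟩ hi
    by_cases h2 : (i : ℕ) < η + k
    · rw [if_neg h1, if_pos h2]
    · refine absurd ⟨⟨(i : ℕ) - k, by omega⟩, ?_⟩ hi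
      ext; simp only [ej]; split_ifs <;> omega
  · intro j
    rw [jj_ej, kd_ej]
    by_cases h1 : (j : ℕ) < η
    · have : (ej η j : Fin (n + k)) = ⟨j, by omega⟩ := by ext; simp [ej, h1]
      simp [h1, this]
    · have : (ej η j : Fin (n + k)) = ⟨j + k, by omega⟩ := by ext; simp [ej, h1]
      rw [← this]
      by_cases h2 : lam j = ej η j
      · simp [h1, h2, pow_two]
      · simp [h1, h2]

theorem m_bound (hηn : η < n) (w : Fin (n + k) → ℕ)
    (hw : ∀ i, w i = (Finset.univ.filter
      (fun j : Fin n => η ≤ (j : ℕ) ∧ lam j = i)).card) (T : Finset (Fin (n + k)))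
    (i : Fin (n + k)) :
    (DC η lam hηn).m T i ≤ w i + if (i : ℕ) < η then 1 else 0 := by
  classical
  set R := T.filter (fun c => 2 ≤ kdC η lam hηn c ∧ lam (jj η hηn c) = i) with hR
  have hk2 : ∀ c, 2 ≤ kdC η lam hηn c → η + k ≤ (c : ℕ) ∧ lam (jj η hηn c) ≠ c := by
    intro c hc
    unfold kdC at hc
    split_ifs at hc with h1 h2 h3
    all_goals omega
  have hjj : ∀ c : Fin (n + k), η + k ≤ (c : ℕ) → ((jj η hηn c : Fin n) : ℕ) = c - k := by
    intro c hc
    simp only [jj]; rw [if_neg (by omega)]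
  have hinj : Set.InjOn (jj η hηn) (R : Set (Fin (n + k))) := by
    intro a ha b hb hab
    simp [hR] at ha hb
    have h1 := (hk2 a ha.2.1).1
    have h2 := (hk2 b hb.2.1).1
    have := congrArg Fin.val hab
    rw [hjj a h1, hjj b h2] at this
    ext; omega
  have himg : R.image (jj η hηn) ⊆ Finset.univ.filter
      (fun j : Fin n => η ≤ (j : ℕ) ∧ lam j = i) := by
    intro j hj
    obtain ⟨c, hc, rfl⟩ := Finset.mem_image.1 hj
    simp [hR] at hc
    have h1 := (hk2 c hc.2.1).1
    simp only [Finset.mem_filter, Finset.mem_univ, true_and]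
    refine ⟨by rw [hjj c h1]; omega, hc.2.2⟩
  have hcard : (R.image (jj η hηn)).card = R.card := Finset.card_image_of_injOn hinj
  have hm : (DC η lam hηn).m T i = R.card + if kdC η lam hηn i = 0 then 1 else 0 := rfl
  rw [hm, hw]
  have hle := Finset.card_le_card himg
  by_cases hi : (i : ℕ) < η
  · rw [if_pos hi]; split_ifs <;> omega
  · rw [if_neg hi, add_zero]
    by_cases hk0 : kdC η lam hηn i = 0
    · rw [if_pos hk0]
      have h4 : η + k ≤ (i : ℕ) ∧ lam (jj η hηn i) = i := by
        unfold kdC at hk0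
        split_ifs at hk0 with h2 h3
        exact ⟨by omega, h3⟩
      have hnot : jj η hηn i ∉ R.image (jj η hηn) := by
        intro h
        obtain ⟨c, hc, hc2⟩ := Finset.mem_image.1 h
        simp [hR] at hc
        have h1 := hk2 c hc.2.1
        have := congrArg Fin.val hc2
        rw [hjj c h1.1, hjj i h4.1] at this
        have : c = i := by ext; omega
        rw [this] at h1
        exact h1.2 h4.2
      have := Finset.card_le_card (Finset.insert_subset (s := R.image (jj η hηn))
        (t := Finset.univ.filter (fun j : Fin n => η ≤ (j : ℕ) ∧ lam j = i))
        (a := jj η hηn i) (by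
          simp only [Finset.mem_filter, Finset.mem_univ, true_and]
          exact ⟨by rw [hjj i h4.1]; omega, h4.2⟩) himg)
      rw [Finset.card_insert_of_notMem hnot] at this
      omega
    · rw [if_neg hk0]; omega

theorem m_q2 (hηn : η < n) (w : Fin (n + k) → ℕ)
    (hw : ∀ i, w i = (Finset.univ.filter
      (fun j : Fin n => η ≤ (j : ℕ) ∧ lam j = i)).card) (q2 : ℕ)
    (hq2 : q2 = max (max
      (((Finset.univ.filter (fun i : Fin (n + k) => (i : ℕ) < η)).sup w) + 4)
      (((Finset.univ.filter (fun i : Fin (n + k) =>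
          η ≤ (i : ℕ) ∧ (i : ℕ) < η + k)).sup w) + 2))
      (((Finset.univ.filter (fun i : Fin (n + k) =>
          η + k ≤ (i : ℕ))).sup w) + 3)) (T : Finset (Fin (n + k))) (i : Fin (n + k)) :
    (DC η lam hηn).m T i + (if (DC η lam hηn).kd i = 1 then 1 else 2) + 1 ≤ q2 := by
  have h := m_bound η lam hηn w hw T i
  have hk : (DC η lam hηn).kd i = kdC η lam hηn i := rfl
  rw [hk]
  by_cases h1 : (i : ℕ) < η
  · have := Finset.le_sup (f := w) (s := Finset.univ.filter
      (fun i : Fin (n + k) => (i : ℕ) < η)) (b := i) (by simp [h1])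
    rw [if_pos h1] at h
    split_ifs <;> omega
  · rw [if_neg h1] at h
    by_cases h2 : (i : ℕ) < η + k
    · have := Finset.le_sup (f := w) (s := Finset.univ.filter
        (fun i : Fin (n + k) => η ≤ (i : ℕ) ∧ (i : ℕ) < η + k)) (b := i)
        (by simp [h2]; omega)
      rw [if_pos (by simp [kdC, h1, h2])]
      omega
    · have := Finset.le_sup (f := w) (s := Finset.univ.filter
        (fun i : Fin (n + k) => η + k ≤ (i : ℕ))) (b := i) (by simp; omega)
      split_ifs <;> omega
end Concrete

theorem cube_eq (d : ℕ) : (volume : Measure (Fin d → ℝ)).restrict (Set.Icc 0 1) =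
    Measure.pi (fun _ : Fin d => μI) := by
  rw [← Set.pi_univ_Icc, volume_pi, Measure.restrict_pi_pi]
  rfl

theorem extOp_eq_E (n k η : ℕ) (hηn : η < n) (lam : Fin n → Fin (n + k))
    (f : (Fin (n + k) → ℝ) → ℂ) (ξ : Fin (n + k) → ℝ) (x : Fin ((n + k) + n) → ℝ) :
    extOp (n + k) n
          (fun ξ j =>
            if (j : ℕ) < η then ξ ⟨(j : ℕ), by have := j.isLt; omega⟩ ^ 2
            else ξ (lam j) * ξ ⟨(j : ℕ) + k, by have := j.isLt; omega⟩)
          f x = (DC η lam hηn).E Finset.univ x f ξ := by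
  unfold extOp Dat.E
  rw [cube_eq]
  congr 1; ext t
  rw [phase_sum]
  simp only [ee, Finset.piecewise_univ]

theorem extOp_bound (d n : ℕ) (Q : (Fin d → ℝ) → Fin n → ℝ)
    (f : (Fin d → ℝ) → ℂ) (hf : Measurable f) {p : ℝ≥0∞} (hp : 1 ≤ p) (x : Fin (d + n) → ℝ) :
    ‖extOp d n Q f x‖ₑ ≤ eLpNorm f p volume := by
  unfold extOp
  rw [cube_eq]
  calc _ ≤ ∫⁻ ξ, ‖f ξ‖ₑ ∂(Measure.pi (fun _ : Fin d => μI)) := by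
        refine (enorm_integral_le_lintegral_enorm _).trans (le_of_eq ?_)
        congr 1; ext ξ
        rw [enorm_mul]
        have := ee_enorm ((∑ i : Fin d, x (Fin.castAdd n i) * ξ i) +
          ∑ j : Fin n, x (Fin.natAdd d j) * Q ξ j)
        unfold ee at this
        rw [this, one_mul]
    _ = eLpNorm f 1 (Measure.pi (fun _ : Fin d => μI)) := eLpNorm_one_eq_lintegral_enorm.symm
    _ ≤ eLpNorm f p (Measure.pi (fun _ : Fin d => μI)) :=
        eLpNorm_le_eLpNorm_of_exponent_le hp hf.aestronglyMeasurable
    _ ≤ _ := by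
        rw [← cube_eq]
        exact eLpNorm_mono_measure _ Measure.restrict_le_self

/-- truncation reduction -/
theorem trunc_reduce (d n : ℕ) (Q : (Fin d → ℝ) → Fin n → ℝ) {p q : ℝ≥0∞} (hp : 1 ≤ p)
    (hQm : ∀ f, BM f → Measurable (extOp d n Q f)) {C : ℝ≥0∞} (hC0 : C ≠ 0)
    (H : ∀ f, BM f → eLpNorm (extOp d n Q f) q volume ≤ C * eLpNorm f p volume)
    (hQ : Measurable Q) (f : (Fin d → ℝ) → ℂ) (hf : Measurable f) :
    eLpNorm (extOp d n Q f) q volume ≤ C * eLpNorm f p volume := by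
  by_cases htop : eLpNorm f p volume = ∞
  · rw [htop, ENNReal.mul_top hC0]; exact le_top
  set fm : ℕ → (Fin d → ℝ) → ℂ := fun m => {ξ | ‖f ξ‖ ≤ m}.indicator f with hfm
  have hfmB : ∀ m, BM (fm m) := by
    intro m
    refine ⟨hf.indicator (measurableSet_le hf.norm measurable_const), m, fun ξ => ?_⟩
    simp only [hfm, Set.indicator]
    split_ifs with h
    · exact h
    · simp
  have hle : ∀ m ξ, ‖fm m ξ‖ ≤ ‖f ξ‖ := fun m ξ => norm_indicator_le_norm_self _ _
  have hfint : Integrable f (volume.restrict (Set.Icc (0 : Fin d → ℝ) 1)) := by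
    rw [← memLp_one_iff_integrable]
    rw [cube_eq]
    refine ⟨hf.aestronglyMeasurable, lt_of_le_of_lt ?_ (lt_top_iff_ne_top.2 htop)⟩
    refine (eLpNorm_le_eLpNorm_of_exponent_le hp hf.aestronglyMeasurable).trans ?_
    rw [← cube_eq]
    exact eLpNorm_mono_measure _ Measure.restrict_le_self
  have hexp : ∀ x : Fin (d + n) → ℝ, Measurable (fun ξ : Fin d → ℝ =>
      Complex.exp (2 * (Real.pi : ℂ) * Complex.I *
      ((((∑ i : Fin d, x (Fin.castAdd n i) * ξ i) +
        ∑ j : Fin n, x (Fin.natAdd d j) * Q ξ j : ℝ)) : ℂ))) := by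
    intro x
    refine ee_meas.comp (f := fun ξ : Fin d → ℝ => (∑ i : Fin d, x (Fin.castAdd n i) * ξ i) +
        ∑ j : Fin n, x (Fin.natAdd d j) * Q ξ j) ?_
    fun_prop
  have hlim : ∀ x, Filter.Tendsto (fun m => extOp d n Q (fm m) x) Filter.atTop
      (nhds (extOp d n Q f x)) := by
    intro x
    unfold extOp
    refine tendsto_integral_of_dominated_convergence (fun ξ => ‖f ξ‖) ?_ hfint.norm ?_ ?_
    · intro m
      exact ((hexp x).mul (hfmB m).1).aestronglyMeasurable
    · intro m
      refine Filter.Eventually.of_forall (fun ξ => ?_)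
      rw [norm_mul]
      have := ee_norm ((∑ i : Fin d, x (Fin.castAdd n i) * ξ i) +
          ∑ j : Fin n, x (Fin.natAdd d j) * Q ξ j)
      unfold ee at this
      rw [this, one_mul]
      exact hle m ξ
    · refine Filter.Eventually.of_forall (fun ξ => ?_)
      refine Filter.Tendsto.const_mul _ ?_
      refine tendsto_const_nhds.congr' ?_
      filter_upwards [Filter.eventually_ge_atTop ⌈‖f ξ‖⌉₊] with m hm
      have : ‖f ξ‖ ≤ m := (Nat.le_ceil _).trans (by exact_mod_cast hm)
      simp only [hfm]
      rw [Set.indicator_of_mem]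
      exact this
  refine (Lp.eLpNorm_lim_le_liminf_eLpNorm (fun m => (hQm _ (hfmB m)).aestronglyMeasurable) _
    (Filter.Eventually.of_forall hlim)).trans ?_
  have : ∀ m, eLpNorm (extOp d n Q (fm m)) q volume ≤ C * eLpNorm f p volume := fun m =>
    (H _ (hfmB m)).trans (mul_le_mul' le_rfl (eLpNorm_mono (hle m)))
  refine (Filter.liminf_le_liminf (Filter.Eventually.of_forall this)).trans ?_
  simp

/-- case (4) of the main theorem, `d = n + k`, monomial with
`η` initial squares. Indices are 0-indexed: the `n` forms are
`Q_j = ξ_j²` for `j < η` and `Q_j = ξ_{lam j} ξ_{j+k}` for `η ≤ j < n`,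
with `(lam j : ℕ) ≤ j + k` for `η ≤ j` (the 1-indexed condition
`λ_j ≤ j` for `η+1+k ≤ j ≤ n+k`), and `w i` counts the `j ≥ η` with
`lam j = i`. -/
theorem statement5 (n k η : ℕ) (hn : 2 ≤ n) (hk : 1 ≤ k)
    (hη1 : 1 ≤ η) (hηn : η < n)
    (lam : Fin n → Fin (n + k))
    (hlam : ∀ j : Fin n, η ≤ (j : ℕ) → (lam j : ℕ) ≤ (j : ℕ) + k)
    (w : Fin (n + k) → ℕ)
    (hw : ∀ i, w i = (Finset.univ.filter
      (fun j : Fin n => η ≤ (j : ℕ) ∧ lam j = i)).card)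
    (hwpos : ∀ i : Fin (n + k), η ≤ (i : ℕ) → (i : ℕ) < η + k → 1 ≤ w i)
    (q2 : ℕ)
    (hq2 : q2 = max (max
      (((Finset.univ.filter (fun i : Fin (n + k) => (i : ℕ) < η)).sup w) + 4)
      (((Finset.univ.filter (fun i : Fin (n + k) =>
          η ≤ (i : ℕ) ∧ (i : ℕ) < η + k)).sup w) + 2))
      (((Finset.univ.filter (fun i : Fin (n + k) =>
          η + k ≤ (i : ℕ))).sup w) + 3))
    (p q : ℝ≥0∞) (hp : 1 ≤ p) (hq : 1 ≤ q)
    (hq3 : (q2 : ℝ≥0∞) < q)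
    (hpq : 1 / p + ((q2 : ℝ≥0∞) - 1) / q < 1) :
    ∃ C : ℝ≥0∞, C < ⊤ ∧
      ∀ f : (Fin (n + k) → ℝ) → ℂ, Measurable f →
        Function.support f ⊆ Set.Icc 0 1 →
        eLpNorm (extOp (n + k) n
          (fun ξ j =>
            if (j : ℕ) < η then ξ ⟨(j : ℕ), by have := j.isLt; omega⟩ ^ 2
            else ξ (lam j) * ξ ⟨(j : ℕ) + k, by have := j.isLt; omega⟩)
          f) q volume ≤
          C * eLpNorm f p volume := by
  by_cases hqtop : q = ∞
  · subst hqtop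
    refine ⟨1, ENNReal.one_lt_top, fun f hf _ => ?_⟩
    rw [one_mul, eLpNorm_exponent_top]
    exact eLpNormEssSup_le_of_ae_enorm_bound
      (Filter.Eventually.of_forall fun x => extOp_bound _ _ _ f hf hp x)
  have hq0 : q ≠ 0 := (lt_of_lt_of_le one_pos hq).ne'
  obtain ⟨r, hr⟩ : ∃ r : ℝ, r = q.toReal := ⟨_, rfl⟩
  have hq2_4 : 4 ≤ q2 := by omega
  have hq24 : (4 : ℝ) ≤ q2 := by exact_mod_cast hq2_4
  have hrq2 : (q2 : ℝ) < r := by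
    rw [hr]
    have := (ENNReal.toReal_lt_toReal (by simp) hqtop).2 hq3
    simpa using this
  have hr0 : 0 < r := by linarith
  obtain ⟨rP, hrP⟩ : ∃ rP : ℝ, rP = max (p⁻¹).toReal (1 / r) := ⟨_, rfl⟩
  have hrP0 : 0 < rP := by rw [hrP]; exact lt_max_of_lt_right (by positivity)
  have hpinv : p⁻¹ ≠ ∞ := by
    rw [Ne, ENNReal.inv_eq_top]; exact (lt_of_lt_of_le one_pos hp).ne'
  have hσ : 0 < 1 - ((q2 : ℝ) - 1) / r - rP := by
    have h1 : (p⁻¹).toReal + ((q2 : ℝ) - 1) / r < 1 := by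
      have h2 : ((q2 : ℝ≥0∞) - 1) / q ≠ ∞ := ENNReal.div_ne_top (by finiteness) hq0
      rw [one_div] at hpq
      have := (ENNReal.toReal_lt_toReal (ENNReal.add_ne_top.2 ⟨hpinv, h2⟩) ENNReal.one_ne_top).2 hpq
      rw [ENNReal.toReal_add hpinv h2, ENNReal.toReal_div, ENNReal.toReal_sub_of_le
        (by exact_mod_cast (by omega : 1 ≤ q2)) (by simp), ← hr] at this
      simpa using this
    have h2 : 1 / r + ((q2 : ℝ) - 1) / r < 1 := by
      rw [← add_div, div_lt_one hr0]; linarith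
    rcases max_cases (p⁻¹).toReal (1 / r) with h | h <;> rw [hrP, h.1] <;> linarith
  obtain ⟨δ, hδ⟩ : ∃ δ : ℝ, δ = (1 - ((q2 : ℝ) - 1) / r - rP) / q2 := ⟨_, rfl⟩
  have hδ0 : 0 < δ := by rw [hδ]; positivity
  have hE : ∀ T i, rP ≤ (DC η lam hηn).e r δ T i := by
    intro T i
    have h1 := m_q2 η lam hηn w hw q2 hq2 T i
    have h2 : (((DC η lam hηn).m T i : ℕ) : ℝ) +
        (if (DC η lam hηn).kd i = 1 then 1 else 2) ≤ q2 - 1 := by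
      have : (((DC η lam hηn).m T i + (if (DC η lam hηn).kd i = 1 then 1 else 2) + 1 : ℕ) : ℝ) ≤ q2 := by
        exact_mod_cast h1
      push_cast at this
      linarith
    have h3 : (((DC η lam hηn).m T i : ℕ) : ℝ) ≤ q2 := by
      have : (DC η lam hηn).m T i ≤ q2 := by omega
      exact_mod_cast this
    unfold Dat.e
    have h4 : (((DC η lam hηn).m T i : ℕ) : ℝ) * δ ≤ q2 * δ := by gcongr
    have h5 : (q2 : ℝ) * δ = 1 - ((q2 : ℝ) - 1) / r - rP := by
      rw [hδ]; field_simp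
    have h6 := div_le_div_of_nonneg_right h2 hr0.le
    linarith
  have hE' : ∀ T i, 1 / r ≤ (DC η lam hηn).e r δ T i := fun T i =>
    le_trans (by rw [hrP]; exact le_max_right _ _) (hE T i)
  have hgood := DC_good η lam hηn hlam
  obtain ⟨C, hC, H⟩ := Dat.Cl_all (by linarith) hδ0 hgood hE'
  refine ⟨C + 1, by simp [hC.lt_top], fun f hf _ => ?_⟩
  refine trunc_reduce _ _ _ hp ?_ (by simp) ?_ ?_ f hf
  · intro f hf
    convert ((DC η lam hηn).E_BM Finset.univ hf 0).1 using 1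
    ext x; exact extOp_eq_E n k η hηn lam f 0 x
  · intro f hf
    rw [eLpNorm_eq_lintegral_rpow_enorm_toReal hq0 hqtop, ← hr]
    simp_rw [extOp_eq_E n k η hηn lam f 0]
    have h1 := H f hf 0 0
    rw [S_univ, lmarginal_univ, ← volume_pi] at h1
    refine h1.trans (mul_le_mul' le_self_add ?_)
    have hP0 : 0 < 1 / rP := by positivity
    have h2 := NL_final (p := (DC η lam hηn).pe r δ Finset.univ) (P := 1 / rP) hP0
      (DC η lam hηn).ord hgood.nodup
      (fun i _ => by
        simp only [Dat.pe, Finset.mem_univ, if_true]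
        exact one_div_pos.2 (lt_of_lt_of_le hrP0 (hE _ _)))
      (fun i _ => by
        simp only [Dat.pe, Finset.mem_univ, if_true]
        exact one_div_le_one_div_of_le hrP0 (hE _ _)) hf.1.enorm 0
    refine h2.trans ?_
    have h3 : (DC η lam hηn).ord.toFinset = Finset.univ := by
      ext i; simp [hgood.mem i]
    rw [h3, lmarginal_univ]
    have h4 : eLpNorm f (ENNReal.ofReal (1 / rP)) (Measure.pi (fun _ : Fin (n + k) => μI)) =
        (∫⁻ ξ, ‖f ξ‖ₑ ^ (1 / rP) ∂(Measure.pi (fun _ : Fin (n + k) => μI))) ^ (1 / (1 / rP)) := by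
      rw [eLpNorm_eq_lintegral_rpow_enorm_toReal (by simp [hrP0]) ENNReal.ofReal_ne_top,
        ENNReal.toReal_ofReal hP0.le]
    dsimp only
    rw [← h4]
    have h5 : ENNReal.ofReal (1 / rP) ≤ p := by
      rw [one_div, ENNReal.ofReal_inv_of_pos hrP0, ENNReal.inv_le_iff_inv_le]
      rw [← ENNReal.ofReal_toReal hpinv]
      exact ENNReal.ofReal_le_ofReal (by rw [hrP]; exact le_max_left _ _)
    refine (eLpNorm_le_eLpNorm_of_exponent_le h5 hf.1.aestronglyMeasurable).trans ?_
    rw [← cube_eq]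
    exact eLpNorm_mono_measure _ Measure.restrict_le_self
  · refine measurable_pi_lambda _ (fun j => ?_)
    split_ifs <;> fun_prop
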